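/- arXiv:2511.03358 — 2 statements merged into one kernel-verified Lean document; each statement's English description precedes it below -/
import Mathlib

section
/- Let V' be a real polynomial of odd degree with positive leading coefficient having exactly N real roots, all of them simple, and fix σa > 0 and σm > 0. Then there exists θ_c > 0 such that for every θ > θ_c the self-consistency equation F_V(θ,σa,σm)[μ] = 0 has exactly N solutions μ ∈ ℝ (equivalently, the McKean–Vlasov SDE dX = (−V'(X) − θ(X − m₁))dt + √(σa² + σm²X²) dW with Itô noise has exactly N stationary measures). -/
open MeasureTheory Real Set Filter

/-- Unnormalised stationary density of the Itô McKean–Vlasov SDE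
`dX = (−V'(X) − θ(X − m₁))dt + √(σa² + σm²X²) dW` with mean replaced by μ. -/
noncomputable def pV (V' : Polynomial ℝ) (θ σa σm μ x : ℝ) : ℝ :=
  (σa ^ 2 + σm ^ 2 * x ^ 2)⁻¹ *
    Real.exp (-2 * ∫ y in (0 : ℝ)..x, (V'.eval y + θ * (y - μ)) / (σa ^ 2 + σm ^ 2 * y ^ 2))

/-- The self-consistency function F_V(θ,σa,σm)[μ]. -/
noncomputable def FV (V' : Polynomial ℝ) (θ σa σm μ : ℝ) : ℝ :=
  (∫ x : ℝ, (x - μ) * pV V' θ σa σm μ x) / ∫ x : ℝ, pV V' θ σa σm μ x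

/-! Write `f` for `V'` and `p μ` for the stationary density with mean frozen at `μ`. The stationary
probability flux vanishes, so `∫ (f x + θ * (x - μ)) * p μ x = 0` and the self-consistency equation
becomes `∫ f * p μ = 0`.

The parameter enters `p μ` only through a factor `exp (μ * h x)` with `h` increasing. The left-hand
side is therefore a Laplace transform in `μ` of a function with the sign changes of `f`, and by
Descartes' rule it has at most as many zeros as `f` has sign changes.

Conversely `p μ` concentrates at `μ` as `θ → ∞`, so for large `θ` the integral has the sign of
`f μ` at finitely many chosen `μ`, one on each side of each sign change of `f`, and the intermediate
value theorem gives a zero near each of them. -/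

open scoped Topology

section ExponentialIntegrals

theorem encard_zeros_le_encard_zeros_deriv_add_one {G G' : ℝ → ℝ}
    (hG : ∀ s, HasDerivAt G (G' s) s) :
    {s | G s = 0}.encard ≤ {s | G' s = 0}.encard + 1 := by
  obtain hfin | hinf := {s | G' s = 0}.finite_or_infinite
  swap
  · simp [hinf.encard_eq]
  by_contra! hlt
  obtain ⟨S, hSG, hS⟩ := exists_subset_encard_eq (Order.add_one_le_of_lt hlt)
  rw [hfin.encard_eq_coe_toFinset_card] at hS
  obtain ⟨S, rfl⟩ := (finite_of_encard_eq_coe (k := hfin.toFinset.card + 1 + 1)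
    (by exact_mod_cast hS)).exists_finset_coe
  have hle : S.card ≤ hfin.toFinset.card + 1 := by
    refine Finset.card_le_of_interleaved fun x hx y hy hxy _ => ?_
    obtain ⟨z, hz, hz0⟩ := exists_hasDerivAt_eq_zero hxy
      (fun s _ => (hG s).continuousAt.continuousWithinAt)
      ((hSG hx).trans (hSG hy).symm) fun s _ => hG s
    exact ⟨z, by simpa using hz0, hz⟩
  rw [encard_coe_eq_coe_finsetCard] at hS
  norm_cast at hS
  lia

theorem abs_mul_exp_le_exp_add_exp {s t : ℝ} (hst : |t - s| ≤ 1) (u : ℝ) :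
    |u| * exp (t * u) ≤ exp ((s + 2) * u) + exp ((s - 2) * u) := by
  have hu : |u| ≤ exp |u| := by linarith [add_one_le_exp |u|]
  have htu : t * u ≤ s * u + |u| := by
    have h : (t - s) * u ≤ 1 * |u| := by
      refine (le_abs_self _).trans ?_
      rw [abs_mul]
      gcongr
    linarith
  calc |u| * exp (t * u) ≤ exp |u| * exp (s * u + |u|) := by gcongr
    _ = exp (s * u + 2 * |u|) := by rw [← exp_add]; ring_nf
    _ ≤ exp ((s + 2) * u) + exp ((s - 2) * u) := by
      rcases abs_cases u with ⟨h, -⟩ | ⟨h, -⟩ <;> rw [h]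
      · exact (exp_le_exp.2 (by linarith)).trans (le_add_of_nonneg_right (exp_pos _).le)
      · exact (exp_le_exp.2 (by linarith)).trans (le_add_of_nonneg_left (exp_pos _).le)

variable {α : Type*} [MeasurableSpace α] {μ : Measure α} {F h : α → ℝ}

theorem hasDerivAt_integral_mul_exp (hh : AEStronglyMeasurable h μ)
    (hF : ∀ s : ℝ, Integrable (fun x => F x * exp (s * h x)) μ) (s : ℝ) :
    Integrable (fun x => F x * h x * exp (s * h x)) μ ∧
      HasDerivAt (fun s => ∫ x, F x * exp (s * h x) ∂μ) (∫ x, F x * h x * exp (s * h x) ∂μ) s := by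
  refine hasDerivAt_integral_of_dominated_loc_of_deriv_le
    (F := fun s x => F x * exp (s * h x)) (F' := fun s x => F x * h x * exp (s * h x))
    (bound := fun x => |F x * exp ((s + 2) * h x)| + |F x * exp ((s - 2) * h x)|)
    (Metric.ball_mem_nhds s one_pos) (Eventually.of_forall fun t => (hF t).aestronglyMeasurable)
    (hF s) ?_ ?_ ((hF _).abs.add (hF _).abs) ?_
  · exact (hh.mul (hF s).aestronglyMeasurable).congr (Eventually.of_forall fun x => by
      simp only [Pi.mul_apply]; ring)
  · refine Eventually.of_forall fun x t ht => ?_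
    have hexp := abs_mul_exp_le_exp_add_exp (Metric.mem_ball.1 ht).le (h x)
    simp only [norm_eq_abs, abs_mul, abs_exp, mul_assoc, ← mul_add]
    gcongr
  · refine Eventually.of_forall fun x t _ => ?_
    have hexp : HasDerivAt (fun t => exp (t * h x)) (exp (t * h x) * h x) t := by
      simpa using ((hasDerivAt_id t).mul_const (h x)).exp
    exact (hexp.const_mul (F x)).congr_deriv (by ring)

/- Descartes' rule of signs for the Laplace transform: after multiplication by `exp (-s * c i)`,
differentiation in `s` multiplies `F` by `h - c i`, so that Rolle's theorem removes the sign changes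
of `F` one at a time. -/
theorem encard_zeros_integral_mul_exp_le {ι : Type*} (hh : AEStronglyMeasurable h μ)
    (c : ι → ℝ) (S : Finset ι) (hF : ∀ s : ℝ, Integrable (fun x => F x * exp (s * h x)) μ)
    (hnonneg : ∀ᵐ x ∂μ, 0 ≤ F x * ∏ i ∈ S, (h x - c i))
    (hne : ¬ ∀ᵐ x ∂μ, F x * ∏ i ∈ S, (h x - c i) = 0) :
    {s : ℝ | ∫ x, F x * exp (s * h x) ∂μ = 0}.encard ≤ S.card := by
  classical
  induction S using Finset.induction_on generalizing F with
  | empty =>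
    simp only [Finset.prod_empty, mul_one] at hnonneg hne
    have hempty : {s : ℝ | ∫ x, F x * exp (s * h x) ∂μ = 0} = ∅ := by
      refine eq_empty_of_forall_notMem fun s hs => hne ?_
      have hzero := (integral_eq_zero_iff_of_nonneg_ae
        (hnonneg.mono fun x hx => mul_nonneg hx (exp_pos _).le) (hF s)).1 hs
      exact hzero.mono fun x hx => (mul_eq_zero.1 hx).resolve_right (exp_pos _).ne'
    simp [hempty]
  | insert i S hi ih =>
    simp only [Finset.prod_insert hi, ← mul_assoc] at hnonneg hne
    have hsplit : ∀ s : ℝ, (fun x => F x * (h x - c i) * exp (s * h x)) =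
        fun x => F x * h x * exp (s * h x) - c i * (F x * exp (s * h x)) := fun s => by
      ext x; ring
    have hFh := hasDerivAt_integral_mul_exp hh hF
    have hderiv : ∀ s, HasDerivAt (fun s => exp (-(s * c i)) * ∫ x, F x * exp (s * h x) ∂μ)
        (exp (-(s * c i)) * ∫ x, F x * (h x - c i) * exp (s * h x) ∂μ) s := fun s => by
      have hexp : HasDerivAt (fun s => exp (-(s * c i))) (exp (-(s * c i)) * -c i) s := by
        simpa using ((hasDerivAt_id s).mul_const (c i)).fun_neg.exp
      refine (hexp.fun_mul (hFh s).2).congr_deriv ?_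
      rw [hsplit, integral_sub (hFh s).1 ((hF s).const_mul _), integral_const_mul]
      ring
    have hrolle := encard_zeros_le_encard_zeros_deriv_add_one hderiv
    simp only [mul_eq_zero, (exp_pos _).ne', false_or] at hrolle
    rw [Finset.card_insert_of_notMem hi, Nat.cast_add, Nat.cast_one]
    refine hrolle.trans (add_le_add_left (ih (fun s => ?_) hnonneg hne) 1)
    rw [hsplit]
    exact (hFh s).1.sub ((hF s).const_mul _)

theorem mul_sub_le_mul_exp {a u t t₀ : ℝ} (ht : t₀ ≤ t) (ha : 0 < u → 0 ≤ a) :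
    (t - t₀) * (|a * exp (t₀ * u)| * max 0 (min 1 u)) - |a * exp (t₀ * u)| ≤ a * exp (t * u) := by
  have hfactor : a * exp (t * u) = a * exp (t₀ * u) * exp ((t - t₀) * u) := by
    rw [mul_assoc, ← exp_add]; ring_nf
  have ht' : 0 ≤ t - t₀ := sub_nonneg.2 ht
  rw [hfactor]
  set k := a * exp (t₀ * u)
  rcases le_or_gt u 0 with hu | hu
  · have hexp : exp ((t - t₀) * u) ≤ 1 := exp_le_one_iff.2 (mul_nonpos_of_nonneg_of_nonpos ht' hu)
    have hbound : |k * exp ((t - t₀) * u)| ≤ |k| := by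
      rw [abs_mul, abs_exp]
      exact mul_le_of_le_one_right (abs_nonneg k) hexp
    rw [max_eq_left ((min_le_right _ _).trans hu)]
    linarith [neg_abs_le (k * exp ((t - t₀) * u))]
  · have hk0 : 0 ≤ k := mul_nonneg (ha hu) (exp_pos _).le
    have hmin : (t - t₀) * max 0 (min 1 u) ≤ (t - t₀) * u := by
      gcongr
      exact max_le hu.le (min_le_right _ _)
    rw [abs_of_nonneg hk0]
    calc (t - t₀) * (k * max 0 (min 1 u)) - k ≤ k * ((t - t₀) * max 0 (min 1 u)) := by linarith
      _ ≤ k * exp ((t - t₀) * u) := by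
        gcongr
        linarith [add_one_le_exp ((t - t₀) * u)]

/- Laplace's method: `∫ g * exp (-t * φ)` is `exp (-t * m)` times `∫ g * exp (t * (m - φ))`, whose
part over `φ < m` grows at least linearly in `t` while the part over `m ≤ φ` stays bounded. -/
theorem eventually_integral_mul_exp_neg_pos {g φ : α → ℝ} {m t₀ : ℝ}
    (hφ : AEStronglyMeasurable φ μ)
    (hint : ∀ t, t₀ ≤ t → Integrable (fun x => g x * exp (-(t * φ x))) μ)
    (hnonneg : ∀ x, φ x < m → 0 ≤ g x) (hpos : μ {x | φ x < m ∧ 0 < g x} ≠ 0) :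
    ∀ᶠ t in atTop, 0 < ∫ x, g x * exp (-(t * φ x)) ∂μ := by
  have hshift : ∀ t x, exp (t * m) * (g x * exp (-(t * φ x))) = g x * exp (t * (m - φ x)) :=
    fun t x => by rw [mul_left_comm, ← exp_add]; ring_nf
  have hint' : ∀ t, t₀ ≤ t → Integrable (fun x => g x * exp (t * (m - φ x))) μ := fun t ht =>
    ((hint t ht).const_mul (exp (t * m))).congr (Eventually.of_forall (hshift t))
  set k : α → ℝ := fun x => |g x * exp (t₀ * (m - φ x))|
  set w : α → ℝ := fun x => k x * max 0 (min 1 (m - φ x))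
  have hkint : Integrable k μ := (hint' t₀ le_rfl).abs
  have hwint : Integrable w μ := by
    refine hkint.mul_bdd (c := 1) ?_ (Eventually.of_forall fun x => ?_)
    · exact aestronglyMeasurable_const.sup
        (aestronglyMeasurable_const.inf (aestronglyMeasurable_const.sub hφ))
    · rw [norm_of_nonneg (le_max_left _ _)]
      exact max_le zero_le_one (min_le_left _ _)
  have hwpos : 0 < ∫ x, w x ∂μ := by
    refine (integral_pos_iff_support_of_nonneg (fun x => by positivity) hwint).2 ?_
    refine hpos.bot_lt.trans_le (measure_mono fun x hx => ?_)
    have := hx.2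
    have := sub_pos.2 hx.1
    exact (by positivity : 0 < k x * max 0 (min 1 (m - φ x))).ne'
  have hbound : ∀ t, t₀ ≤ t → ∀ x, (t - t₀) * w x - k x ≤ g x * exp (t * (m - φ x)) :=
    fun t ht x => mul_sub_le_mul_exp ht fun hx => hnonneg x (sub_pos.1 hx)
  have hlarge : ∀ᶠ t in atTop, 0 < (t - t₀) * (∫ x, w x ∂μ) - ∫ x, k x ∂μ := by
    have hlim : Tendsto (fun t => (t - t₀) * ∫ x, w x ∂μ) atTop atTop :=
      (tendsto_atTop_add_const_right _ (-t₀) tendsto_id).atTop_mul_const hwpos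
    exact (hlim.eventually_gt_atTop _).mono fun t => sub_pos.2
  filter_upwards [hlarge, eventually_ge_atTop t₀] with t hpos ht
  refine pos_of_mul_pos_right (a := exp (t * m)) ?_ (exp_pos _).le
  rw [← integral_const_mul]
  simp only [hshift]
  refine hpos.trans_le ?_
  rw [← integral_const_mul, ← integral_sub (hwint.const_mul _) hkint]
  exact integral_mono ((hwint.const_mul _).sub hkint) (hint' t ht) (hbound t ht)

end ExponentialIntegrals

section StationaryDensity

/-- The unnormalised stationary density of the Itô diffusion `dX = -b(X) dt + √D(X) dW`. -/
noncomputable def stationaryDensity (D b : ℝ → ℝ) (x : ℝ) : ℝ :=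
  (D x)⁻¹ * exp (-2 * ∫ y in (0 : ℝ)..x, b y / D y)

/-- The restoring force `b` (the negative of the drift) grows at least linearly at both ends of the
line. Together with a diffusivity of at most quadratic growth, this makes the stationary density
normalisable. -/
def LinearlyConfining (b : ℝ → ℝ) : Prop :=
  ∃ k > 0, (∀ᶠ x in atTop, k * x ≤ b x) ∧ ∀ᶠ x in atBot, b x ≤ k * x

theorem LinearlyConfining.neg_comp_neg {b : ℝ → ℝ} (hb : LinearlyConfining b) :
    LinearlyConfining fun x => -b (-x) := by
  obtain ⟨k, hk, htop, hbot⟩ := hb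
  refine ⟨k, hk, ?_, ?_⟩
  · filter_upwards [tendsto_neg_atTop_atBot.eventually hbot] with x hx
    linarith
  · filter_upwards [tendsto_neg_atBot_atTop.eventually htop] with x hx
    linarith

theorem LinearlyConfining.id_isBigO {b : ℝ → ℝ} (hb : LinearlyConfining b) :
    (fun x => x) =O[cocompact ℝ] b := by
  obtain ⟨k, hk, htop, hbot⟩ := hb
  rw [cocompact_eq_atBot_atTop]
  refine Asymptotics.IsBigO.of_bound k⁻¹ (eventually_sup.2 ⟨?_, ?_⟩)
  · filter_upwards [hbot, eventually_le_atBot 0] with x hx hx0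
    rw [le_inv_mul_iff₀ hk, norm_of_nonpos hx0,
      norm_of_nonpos (hx.trans (mul_nonpos_of_nonneg_of_nonpos hk.le hx0))]
    linarith
  · filter_upwards [htop, eventually_ge_atTop 0] with x hx hx0
    rwa [le_inv_mul_iff₀ hk, norm_of_nonneg hx0,
      norm_of_nonneg ((mul_nonneg hk.le hx0).trans hx)]

theorem LinearlyConfining.add_mul_sub {f : ℝ → ℝ} {θ : ℝ} (htop : ∀ᶠ x in atTop, 0 ≤ f x)
    (hbot : ∀ᶠ x in atBot, f x ≤ 0) (hθ : 0 < θ) (m : ℝ) :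
    LinearlyConfining fun x => f x + θ * (x - m) := by
  refine ⟨θ / 2, half_pos hθ, ?_, ?_⟩
  · filter_upwards [htop, eventually_ge_atTop (2 * m)] with x hf hx
    nlinarith
  · filter_upwards [hbot, eventually_le_atBot (2 * m)] with x hf hx
    nlinarith

variable {D b g : ℝ → ℝ} {C : ℝ}

theorem hasDerivAt_integral_div (hD : Continuous D) (hD₀ : ∀ x, 0 < D x) (hb : Continuous b)
    (x : ℝ) : HasDerivAt (fun x => ∫ y in (0 : ℝ)..x, b y / D y) (b x / D x) x :=
  ((hb.div hD fun x => (hD₀ x).ne').integral_hasStrictDerivAt 0 x).hasDerivAt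

theorem continuous_integral_div (hD : Continuous D) (hD₀ : ∀ x, 0 < D x) (hb : Continuous b) :
    Continuous fun x => ∫ y in (0 : ℝ)..x, b y / D y :=
  continuous_iff_continuousAt.2 fun x => (hasDerivAt_integral_div hD hD₀ hb x).continuousAt

theorem strictMono_integral_div (hD : Continuous D) (hD₀ : ∀ x, 0 < D x) (hb : Continuous b)
    (hb₀ : ∀ x, 0 < b x) : StrictMono fun x => ∫ y in (0 : ℝ)..x, b y / D y :=
  strictMono_of_hasDerivAt_pos (fun x => hasDerivAt_integral_div hD hD₀ hb x)
    fun x => div_pos (hb₀ x) (hD₀ x)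

theorem tendsto_integral_div_atTop (hD : Continuous D) (hD₀ : ∀ x, 0 < D x)
    (hDC : ∀ x, D x ≤ C * (1 + x ^ 2)) (hb : Continuous b) (hconf : LinearlyConfining b) :
    Tendsto (fun x => ∫ y in (0 : ℝ)..x, b y / D y) atTop atTop := by
  obtain ⟨k, hk, htop, -⟩ := hconf
  obtain ⟨R, hR⟩ := eventually_atTop.1 (htop.and (eventually_ge_atTop 0))
  have hC : 0 < C := by simpa using (hD₀ 0).trans_le (hDC 0)
  set κ := k / (2 * C) with hκ
  have hderiv : ∀ x, HasDerivAt (fun x => (∫ y in (0 : ℝ)..x, b y / D y) - κ * log (1 + x ^ 2))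
      (b x / D x - κ * (2 * x / (1 + x ^ 2))) x := fun x => by
    have hsq : HasDerivAt (fun x : ℝ => 1 + x ^ 2) (2 * x) x := by
      simpa using (hasDerivAt_pow 2 x).const_add 1
    exact (hasDerivAt_integral_div hD hD₀ hb x).fun_sub
      ((hsq.log (by positivity)).const_mul κ)
  have hmono : MonotoneOn (fun x => (∫ y in (0 : ℝ)..x, b y / D y) - κ * log (1 + x ^ 2))
      (Ici R) := by
    refine monotoneOn_of_hasDerivWithinAt_nonneg (convex_Ici R)
      (fun x _ => (hderiv x).continuousAt.continuousWithinAt)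
      (fun x _ => (hderiv x).hasDerivWithinAt) fun x hx => sub_nonneg.2 ?_
    obtain ⟨hbx, hx0⟩ := hR x (interior_subset hx)
    calc κ * (2 * x / (1 + x ^ 2)) = k * x / (C * (1 + x ^ 2)) := by rw [hκ]; field_simp
      _ ≤ b x / D x := div_le_div₀ ((mul_nonneg hk.le hx0).trans hbx) hbx (hD₀ x) (hDC x)
  have hlog : Tendsto (fun x : ℝ => log (1 + x ^ 2)) atTop atTop :=
    tendsto_log_atTop.comp (tendsto_atTop_add_const_left _ 1 (tendsto_pow_atTop two_ne_zero))
  refine tendsto_atTop_mono' _ ?_ (tendsto_atTop_add_const_left _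
    ((∫ y in (0 : ℝ)..R, b y / D y) - κ * log (1 + R ^ 2)) 
      (hlog.const_mul_atTop (by positivity : 0 < κ)))
  filter_upwards [eventually_ge_atTop R] with x hx
  have := hmono self_mem_Ici hx hx
  simp only at this
  linarith

theorem stationaryDensity_pos (hD₀ : ∀ x, 0 < D x) (x : ℝ) : 0 < stationaryDensity D b x :=
  mul_pos (inv_pos.2 (hD₀ x)) (exp_pos _)

theorem continuous_stationaryDensity (hD : Continuous D) (hD₀ : ∀ x, 0 < D x) (hb : Continuous b) :
    Continuous (stationaryDensity D b) := by
  have hint := continuous_integral_div hD hD₀ hb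
  exact (hD.inv₀ fun x => (hD₀ x).ne').mul (by fun_prop)

theorem stationaryDensity_neg_comp_neg (x : ℝ) :
    stationaryDensity (fun y => D (-y)) (fun y => -b (-y)) x = stationaryDensity D b (-x) := by
  have hint : ∫ y in (0 : ℝ)..x, -b (-y) / D (-y) = ∫ y in (0 : ℝ)..(-x), b y / D y := by
    simp only [neg_div, intervalIntegral.integral_neg]
    rw [intervalIntegral.integral_comp_neg fun y => b y / D y, neg_zero,
      intervalIntegral.integral_symm, neg_neg]
  simp only [stationaryDensity, hint]

theorem stationaryDensity_add (hD : Continuous D) (hD₀ : ∀ x, 0 < D x) (hb : Continuous b)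
    (hg : Continuous g) (x : ℝ) :
    stationaryDensity D (fun y => b y + g y) x =
      stationaryDensity D b x * exp (-2 * ∫ y in (0 : ℝ)..x, g y / D y) := by
  have hii : ∀ {u : ℝ → ℝ}, Continuous u → IntervalIntegrable (fun y => u y / D y) volume 0 x :=
    fun hu => (hu.div hD fun y => (hD₀ y).ne').intervalIntegrable _ _
  simp only [stationaryDensity, add_div]
  rw [intervalIntegral.integral_add (hii hb) (hii hg), mul_add, exp_add, mul_assoc]

/- The stationary Fokker–Planck equation with vanishing probability flux. -/
theorem hasDerivAt_mul_stationaryDensity (hD : Continuous D) (hD₀ : ∀ x, 0 < D x)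
    (hb : Continuous b) (x : ℝ) :
    HasDerivAt (fun x => D x * stationaryDensity D b x)
      (-2 * (b x * stationaryDensity D b x)) x := by
  have hexp : (fun x => D x * stationaryDensity D b x) =
      fun x => exp (-2 * ∫ y in (0 : ℝ)..x, b y / D y) :=
    funext fun x => mul_inv_cancel_left₀ (hD₀ x).ne' _
  rw [hexp]
  refine ((hasDerivAt_integral_div hD hD₀ hb x).const_mul (-2)).exp.congr_deriv ?_
  rw [stationaryDensity, div_eq_mul_inv]
  ring

theorem tendsto_mul_stationaryDensity_atTop (hD : Continuous D) (hD₀ : ∀ x, 0 < D x)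
    (hDC : ∀ x, D x ≤ C * (1 + x ^ 2)) (hb : Continuous b) (hconf : LinearlyConfining b) :
    Tendsto (fun x => D x * stationaryDensity D b x) atTop (𝓝 0) := by
  refine (tendsto_exp_atBot.comp ((tendsto_integral_div_atTop hD hD₀ hDC hb
    hconf).const_mul_atTop_of_neg (by norm_num : (-2 : ℝ) < 0))).congr fun x => ?_
  exact (mul_inv_cancel_left₀ (hD₀ x).ne' _).symm

theorem exists_integrableOn_Ioi_mul_stationaryDensity (hD : Continuous D) (hD₀ : ∀ x, 0 < D x)
    (hDC : ∀ x, D x ≤ C * (1 + x ^ 2)) (hb : Continuous b) (hconf : LinearlyConfining b) :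
    ∃ R, IntegrableOn (fun x => b x * stationaryDensity D b x) (Ioi R) := by
  obtain ⟨k, hk, htop, -⟩ := id hconf
  obtain ⟨R, hR⟩ := eventually_atTop.1 (htop.and (eventually_ge_atTop 0))
  have hint : IntegrableOn (fun x => -2 * (b x * stationaryDensity D b x)) (Ioi R) := by
    refine integrableOn_Ioi_deriv_of_nonpos'
      (fun x _ => hasDerivAt_mul_stationaryDensity hD hD₀ hb x) (fun x hx => ?_)
      (tendsto_mul_stationaryDensity_atTop hD hD₀ hDC hb hconf)
    obtain ⟨hbx, hx0⟩ := hR x (le_of_lt hx)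
    have hbx0 : 0 ≤ b x := (mul_nonneg hk.le hx0).trans hbx
    have := mul_nonneg hbx0 (stationaryDensity_pos hD₀ (b := b) x).le
    linarith
  refine ⟨R, (hint.const_mul (-2)⁻¹).congr (Eventually.of_forall fun x => ?_)⟩
  exact inv_mul_cancel_left₀ (by norm_num) _

theorem integrable_mul_stationaryDensity_self (hD : Continuous D) (hD₀ : ∀ x, 0 < D x)
    (hDC : ∀ x, D x ≤ C * (1 + x ^ 2)) (hb : Continuous b) (hconf : LinearlyConfining b) :
    Integrable fun x => b x * stationaryDensity D b x := by
  obtain ⟨R, hR⟩ := exists_integrableOn_Ioi_mul_stationaryDensity hD hD₀ hDC hb hconf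
  obtain ⟨L, hL⟩ := exists_integrableOn_Ioi_mul_stationaryDensity (D := fun x => D (-x))
    (by fun_prop) (fun x => hD₀ (-x)) (fun x => by simpa using hDC (-x))
    (by fun_prop : Continuous fun x => -b (-x)) hconf.neg_comp_neg
  have hLneg : IntegrableOn (fun x => b x * stationaryDensity D b x) (Iio (-L)) := by
    rw [← neg_neg L] at hL
    refine hL.comp_neg_Iio.neg.congr (Eventually.of_forall fun x => ?_)
    simp [stationaryDensity_neg_comp_neg]
  exact integrable_iff_integrableAtFilter_atBot_atTop.2
    ⟨⟨⟨_, Iio_mem_atBot _, hLneg⟩, ⟨_, Ioi_mem_atTop _, hR⟩⟩,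
      (hb.mul (continuous_stationaryDensity hD hD₀ hb)).locallyIntegrable⟩

theorem integral_mul_stationaryDensity_self (hD : Continuous D) (hD₀ : ∀ x, 0 < D x)
    (hDC : ∀ x, D x ≤ C * (1 + x ^ 2)) (hb : Continuous b) (hconf : LinearlyConfining b) :
    ∫ x, b x * stationaryDensity D b x = 0 := by
  have hbot : Tendsto (fun x => D x * stationaryDensity D b x) atBot (𝓝 0) := by
    have hneg := (tendsto_mul_stationaryDensity_atTop (D := fun x => D (-x)) (by fun_prop)
      (fun x => hD₀ (-x)) (fun x => by simpa using hDC (-x))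
      (by fun_prop : Continuous fun x => -b (-x)) hconf.neg_comp_neg).comp tendsto_neg_atBot_atTop
    exact hneg.congr fun x => by simp [stationaryDensity_neg_comp_neg]
  have hzero := integral_of_hasDerivAt_of_tendsto (hasDerivAt_mul_stationaryDensity hD hD₀ hb)
    ((integrable_mul_stationaryDensity_self hD hD₀ hDC hb hconf).const_mul (-2)) hbot
    (tendsto_mul_stationaryDensity_atTop hD hD₀ hDC hb hconf)
  rw [integral_const_mul] at hzero
  linarith

theorem integrable_mul_stationaryDensity_of_isBigO (hD : Continuous D) (hD₀ : ∀ x, 0 < D x)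
    (hDC : ∀ x, D x ≤ C * (1 + x ^ 2)) (hb : Continuous b) (hconf : LinearlyConfining b)
    (hg : Continuous g) (hgb : g =O[cocompact ℝ] b) :
    Integrable fun x => g x * stationaryDensity D b x :=
  (hg.mul (continuous_stationaryDensity hD hD₀ hb)).locallyIntegrable.integrable_of_isBigO_cocompact
    (hgb.mul (Asymptotics.isBigO_refl _ _))
    ((integrable_mul_stationaryDensity_self hD hD₀ hDC hb hconf).integrableAtFilter _)

end StationaryDensity

section McKeanVlasov

/-- The unnormalised stationary density of the McKean–Vlasov diffusion
`dX = -(f(X) + θ (X - m₁)) dt + √D(X) dW` with its mean `m₁` replaced by the parameter `μ`. -/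
noncomputable def mvDensity (D f : ℝ → ℝ) (θ μ : ℝ) : ℝ → ℝ :=
  stationaryDensity D fun y => f y + θ * (y - μ)

/-- The mean of the probability law with density proportional to `mvDensity D f θ μ`, minus `μ`.
Its zeros are the means of the stationary measures of the McKean–Vlasov diffusion. -/
noncomputable def selfConsistency (D f : ℝ → ℝ) (θ μ : ℝ) : ℝ :=
  (∫ x, (x - μ) * mvDensity D f θ μ x) / ∫ x, mvDensity D f θ μ x

variable {D f : ℝ → ℝ} {C θ : ℝ}

theorem mul_mvDensity_eq_mul_exp (hD : Continuous D) (hD₀ : ∀ x, 0 < D x) (hf : Continuous f)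
    (μ : ℝ) :
    (fun x => f x * mvDensity D f θ μ x) = fun x =>
      f x * mvDensity D f θ 0 x * exp (μ * ∫ y in (0 : ℝ)..x, 2 * θ / D y) := by
  have hdrift : (fun y => f y + θ * (y - μ)) = fun y => f y + θ * (y - 0) + -(θ * μ) :=
    funext fun y => by ring
  ext x
  rw [mvDensity, hdrift, stationaryDensity_add hD hD₀ (by fun_prop) continuous_const, mul_assoc]
  simp only [mvDensity, div_eq_mul_inv, intervalIntegral.integral_const_mul]
  congr 3
  ring

theorem mvDensity_eq_stationaryDensity_mul_exp (hD : Continuous D) (hD₀ : ∀ x, 0 < D x)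
    (hf : Continuous f) (μ x : ℝ) :
    mvDensity D f θ μ x =
      stationaryDensity D f x * exp (-(θ * ∫ y in (0 : ℝ)..x, 2 * (y - μ) / D y)) := by
  rw [mvDensity, stationaryDensity_add hD hD₀ hf (by fun_prop)]
  simp only [mul_div_assoc, intervalIntegral.integral_const_mul]
  congr 2
  ring

theorem integrable_sub_mul_mvDensity (hD : Continuous D) (hD₀ : ∀ x, 0 < D x)
    (hDC : ∀ x, D x ≤ C * (1 + x ^ 2)) (hf : Continuous f) (htop : ∀ᶠ x in atTop, 0 ≤ f x)
    (hbot : ∀ᶠ x in atBot, f x ≤ 0) (hθ : 0 < θ) (μ c : ℝ) :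
    Integrable fun x => (x - c) * mvDensity D f θ μ x := by
  have hconf := LinearlyConfining.add_mul_sub htop hbot hθ μ
  have hid : (fun x => x - c) =O[cocompact ℝ] fun x => x := by
    rw [← Metric.cobounded_eq_cocompact]
    exact (Asymptotics.isBigO_refl _ _).sub (Asymptotics.isLittleO_const_id_cobounded c).isBigO
  exact integrable_mul_stationaryDensity_of_isBigO hD hD₀ hDC (by fun_prop) hconf (by fun_prop)
    (hid.trans hconf.id_isBigO)

theorem integrable_mvDensity (hD : Continuous D) (hD₀ : ∀ x, 0 < D x)
    (hDC : ∀ x, D x ≤ C * (1 + x ^ 2)) (hf : Continuous f) (htop : ∀ᶠ x in atTop, 0 ≤ f x)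
    (hbot : ∀ᶠ x in atBot, f x ≤ 0) (hθ : 0 < θ) (μ : ℝ) :
    Integrable (mvDensity D f θ μ) := by
  have hsub := integrable_sub_mul_mvDensity hD hD₀ hDC hf htop hbot hθ μ
  refine ((hsub 0).sub (hsub 1)).congr (Eventually.of_forall fun x => ?_)
  simp only [Pi.sub_apply]
  ring

theorem integrable_mul_mvDensity (hD : Continuous D) (hD₀ : ∀ x, 0 < D x)
    (hDC : ∀ x, D x ≤ C * (1 + x ^ 2)) (hf : Continuous f) (htop : ∀ᶠ x in atTop, 0 ≤ f x)
    (hbot : ∀ᶠ x in atBot, f x ≤ 0) (hθ : 0 < θ) (μ : ℝ) :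
    Integrable fun x => f x * mvDensity D f θ μ x := by
  refine ((integrable_mul_stationaryDensity_self hD hD₀ hDC (by fun_prop)
    (LinearlyConfining.add_mul_sub htop hbot hθ μ)).sub ((integrable_sub_mul_mvDensity hD hD₀ hDC hf
      htop hbot hθ μ μ).const_mul θ)).congr (Eventually.of_forall fun x => ?_)
  simp only [Pi.sub_apply, mvDensity]
  ring

theorem selfConsistency_eq_zero_iff (hD : Continuous D) (hD₀ : ∀ x, 0 < D x)
    (hDC : ∀ x, D x ≤ C * (1 + x ^ 2)) (hf : Continuous f) (htop : ∀ᶠ x in atTop, 0 ≤ f x)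
    (hbot : ∀ᶠ x in atBot, f x ≤ 0) (hθ : 0 < θ) (μ : ℝ) :
    selfConsistency D f θ μ = 0 ↔ ∫ x, f x * mvDensity D f θ μ x = 0 := by
  have hmass : 0 < ∫ x, mvDensity D f θ μ x :=
    integral_pos_of_integrable_nonneg_nonzero (x := 0)
      (continuous_stationaryDensity hD hD₀ (by fun_prop))
      (integrable_mvDensity hD hD₀ hDC hf htop hbot hθ μ)
      (fun x => (stationaryDensity_pos hD₀ x).le) (stationaryDensity_pos hD₀ 0).ne'
  have hflux : (∫ x, f x * mvDensity D f θ μ x) + θ * ∫ x, (x - μ) * mvDensity D f θ μ x = 0 := by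
    rw [← integral_const_mul, ← integral_add
      (integrable_mul_mvDensity hD hD₀ hDC hf htop hbot hθ μ)
      ((integrable_sub_mul_mvDensity hD hD₀ hDC hf htop hbot hθ μ μ).const_mul θ)]
    simpa only [mvDensity, add_mul, mul_assoc] using integral_mul_stationaryDensity_self hD hD₀ hDC
      (by fun_prop) (LinearlyConfining.add_mul_sub htop hbot hθ μ)
  rw [selfConsistency, div_eq_zero_iff, or_iff_left hmass.ne']
  constructor
  · intro hmean
    simpa [hmean] using hflux
  · intro hforce
    simpa [hforce, hθ.ne'] using hflux

theorem continuous_integral_mul_mvDensity (hD : Continuous D) (hD₀ : ∀ x, 0 < D x)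
    (hDC : ∀ x, D x ≤ C * (1 + x ^ 2)) (hf : Continuous f) (htop : ∀ᶠ x in atTop, 0 ≤ f x)
    (hbot : ∀ᶠ x in atBot, f x ≤ 0) (hθ : 0 < θ) :
    Continuous fun μ => ∫ x, f x * mvDensity D f θ μ x := by
  have hint := integrable_mul_mvDensity hD hD₀ hDC hf htop hbot hθ
  have hscale : Continuous fun x => ∫ y in (0 : ℝ)..x, 2 * θ / D y :=
    continuous_integral_div hD hD₀ continuous_const
  simp_rw +singlePass [mul_mvDensity_eq_mul_exp hD hD₀ hf] at hint ⊢
  exact continuous_iff_continuousAt.2 fun μ =>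
    (hasDerivAt_integral_mul_exp hscale.aestronglyMeasurable hint μ).2.continuousAt

theorem exists_setOf_integral_sub_div_lt_subset (hD : Continuous D) (hD₀ : ∀ x, 0 < D x) (μ : ℝ)
    {U : Set ℝ} (hU : U ∈ 𝓝 μ) :
    ∃ m, (∫ y in (0 : ℝ)..μ, 2 * (y - μ) / D y) < m ∧
      {x | (∫ y in (0 : ℝ)..x, 2 * (y - μ) / D y) < m} ⊆ U := by
  set φ : ℝ → ℝ := fun x => ∫ y in (0 : ℝ)..x, 2 * (y - μ) / D y
  have hφ : ∀ x, HasDerivAt φ (2 * (x - μ) / D x) x :=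
    hasDerivAt_integral_div hD hD₀ (by fun_prop)
  have hcont : Continuous φ := continuous_integral_div hD hD₀ (by fun_prop)
  have hanti : StrictAntiOn φ (Iic μ) :=
    strictAntiOn_of_hasDerivWithinAt_neg (convex_Iic μ) hcont.continuousOn
      (fun x _ => (hφ x).hasDerivWithinAt) fun x hx => by
        rw [interior_Iic, mem_Iio] at hx
        exact div_neg_of_neg_of_pos (by linarith) (hD₀ x)
  have hmono : StrictMonoOn φ (Ici μ) :=
    strictMonoOn_of_hasDerivWithinAt_pos (convex_Ici μ) hcont.continuousOn
      (fun x _ => (hφ x).hasDerivWithinAt) fun x hx => by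
        rw [interior_Ici, mem_Ioi] at hx
        exact div_pos (by linarith) (hD₀ x)
  obtain ⟨l, r, ⟨hl, hr⟩, hlr⟩ := mem_nhds_iff_exists_Ioo_subset.1 hU
  refine ⟨min (φ l) (φ r), lt_min (hanti hl.le self_mem_Iic hl) (hmono self_mem_Ici hr.le hr),
    fun x hx => hlr ⟨?_, ?_⟩⟩
  · by_contra! hxl
    exact (hx.trans_le (min_le_left _ _)).not_ge (hanti.antitoneOn (hxl.trans hl.le) hl.le hxl)
  · by_contra! hrx
    exact (hx.trans_le (min_le_right _ _)).not_ge (hmono.monotoneOn hr.le (hr.le.trans hrx) hrx)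

theorem eventually_mul_integral_mul_mvDensity_pos (hD : Continuous D) (hD₀ : ∀ x, 0 < D x)
    (hDC : ∀ x, D x ≤ C * (1 + x ^ 2)) (hf : Continuous f) (htop : ∀ᶠ x in atTop, 0 ≤ f x)
    (hbot : ∀ᶠ x in atBot, f x ≤ 0) {μ : ℝ} (hμ : f μ ≠ 0) :
    ∀ᶠ θ in atTop, 0 < f μ * ∫ x, f x * mvDensity D f θ μ x := by
  have hnear : {x | 0 < f μ * f x} ∈ 𝓝 μ :=
    (isOpen_lt continuous_const (by fun_prop)).mem_nhds (mul_self_pos.2 hμ)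
  obtain ⟨m, hm, hmlt⟩ := exists_setOf_integral_sub_div_lt_subset hD hD₀ μ hnear
  set φ : ℝ → ℝ := fun x => ∫ y in (0 : ℝ)..x, 2 * (y - μ) / D y
  have hcont : Continuous φ := continuous_integral_div hD hD₀ (by fun_prop)
  have hintegrand : ∀ θ, (fun x => f μ * (f x * mvDensity D f θ μ x)) =
      fun x => f μ * f x * stationaryDensity D f x * exp (-(θ * φ x)) := fun θ => by
    ext x
    rw [mvDensity_eq_stationaryDensity_mul_exp hD hD₀ hf]
    ring
  have hweight : ∀ x, φ x < m → 0 < f μ * f x * stationaryDensity D f x := fun x hx =>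
    mul_pos (hmlt hx) (stationaryDensity_pos hD₀ x)
  simp_rw [← integral_const_mul, hintegrand]
  refine eventually_integral_mul_exp_neg_pos (m := m) (t₀ := 1) hcont.aestronglyMeasurable
    (fun θ hθ => ?_) (fun x hx => (hweight x hx).le) ?_
  · rw [← hintegrand]
    exact (integrable_mul_mvDensity hD hD₀ hDC hf htop hbot (one_pos.trans_le hθ) μ).const_mul _
  · have hopen : {x | φ x < m ∧ 0 < f μ * f x * stationaryDensity D f x} = {x | φ x < m} :=
      ext fun x => and_iff_left_of_imp (hweight x)
    rw [hopen]
    exact ((isOpen_lt hcont continuous_const).measure_pos volume ⟨μ, hm⟩).ne'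

end McKeanVlasov

section SignChanges

/-- The points of `T` are exactly the places where `f` changes sign: `f` is nonnegative to the right
of `T`, flips sign across each point of `T`, and vanishes on no interval. Zeros of `f` without a
change of sign are allowed. -/
structure ChangesSignExactlyAt (f : ℝ → ℝ) (T : Finset ℝ) : Prop where
  nonneg_mul_prod : ∀ x, 0 ≤ f x * ∏ c ∈ T, (x - c)
  dense_ne_zero : Dense {x | f x ≠ 0}

variable {f : ℝ → ℝ} {T : Finset ℝ}

theorem eventually_nonneg_atTop_of_nonneg_mul_prod (hsign : ∀ x, 0 ≤ f x * ∏ c ∈ T, (x - c)) :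
    ∀ᶠ x in atTop, 0 ≤ f x := by
  filter_upwards [(eventually_all_finset T).2 fun c _ => eventually_gt_atTop c] with x hx
  exact (mul_nonneg_iff_of_pos_right (Finset.prod_pos fun c hc => sub_pos.2 (hx c hc))).1 (hsign x)

theorem eventually_nonpos_atBot_of_nonneg_mul_prod (hsign : ∀ x, 0 ≤ f x * ∏ c ∈ T, (x - c))
    (hT : Odd T.card) : ∀ᶠ x in atBot, f x ≤ 0 := by
  filter_upwards [(eventually_all_finset T).2 fun c _ => eventually_lt_atBot c] with x hx
  have hprod : ∏ c ∈ T, (x - c) = -∏ c ∈ T, (c - x) := by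
    simp_rw [← neg_sub _ x, Finset.prod_neg, hT.neg_one_pow, neg_one_mul]
  have hpos : 0 < ∏ c ∈ T, (c - x) := Finset.prod_pos fun c hc => sub_pos.2 (hx c hc)
  have hsignx := hsign x
  rw [hprod] at hsignx
  exact nonpos_of_mul_nonneg_left hsignx (neg_lt_zero.2 hpos)

theorem ChangesSignExactlyAt.exists_Icc_subset_mul_neg (hfT : ChangesSignExactlyAt f T) {c : ℝ}
    (hc : c ∈ T) {U : Set ℝ} (hU : U ∈ 𝓝 c) : ∃ a b, a ≤ b ∧ Icc a b ⊆ U ∧ f a * f b < 0 := by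
  have hisolated : ((T.erase c : Finset ℝ) : Set ℝ)ᶜ ∈ 𝓝 c :=
    (T.erase c).finite_toSet.isClosed.isOpen_compl.mem_nhds (by simp)
  obtain ⟨l, r, ⟨hl, hr⟩, hlr⟩ := mem_nhds_iff_exists_Ioo_subset.1 (inter_mem hU hisolated)
  obtain ⟨a, ha, hla, hac⟩ := hfT.dense_ne_zero.exists_mem_open isOpen_Ioo (nonempty_Ioo.2 hl)
  obtain ⟨b, hb, hcb, hbr⟩ := hfT.dense_ne_zero.exists_mem_open isOpen_Ioo (nonempty_Ioo.2 hr)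
  have hab : Icc a b ⊆ Ioo l r := Icc_subset_Ioo hla hbr
  have hsame : 0 < ∏ d ∈ T.erase c, (a - d) * (b - d) := Finset.prod_pos fun d hd => by
    by_contra! hle
    have hmem : d ∈ Icc a b := by
      constructor <;> by_contra! h <;> nlinarith
    exact (hlr (hab hmem)).2 hd
  have hopposite : (∏ d ∈ T, (a - d)) * ∏ d ∈ T, (b - d) < 0 := by
    rw [← Finset.prod_mul_distrib, ← Finset.mul_prod_erase T _ hc]
    exact mul_neg_of_neg_of_pos (mul_neg_of_neg_of_pos (sub_neg.2 hac) (sub_pos.2 hcb)) hsame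
  have hmul : 0 ≤ f a * f b * ((∏ d ∈ T, (a - d)) * ∏ d ∈ T, (b - d)) :=
    (mul_nonneg (hfT.nonneg_mul_prod a) (hfT.nonneg_mul_prod b)).trans_eq (mul_mul_mul_comm _ _ _ _)
  exact ⟨a, b, (hac.trans hcb).le, hab.trans (hlr.trans inter_subset_left),
    (nonpos_of_mul_nonneg_left hmul hopposite).lt_of_ne (mul_ne_zero ha hb)⟩

theorem nonneg_mul_prod_sub_of_monotone (hsign : ∀ x, 0 ≤ f x * ∏ c ∈ T, (x - c)) {h : ℝ → ℝ}
    (hh : Monotone h) (x : ℝ) : 0 ≤ f x * ∏ c ∈ T, (h x - h c) := by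
  have hslope : ∀ c, 0 ≤ slope h c x := fun c => by
    rw [slope_def_field]
    rcases le_total c x with hcx | hxc
    · exact div_nonneg (sub_nonneg.2 (hh hcx)) (sub_nonneg.2 hcx)
    · exact div_nonneg_of_nonpos (sub_nonpos.2 (hh hxc)) (sub_nonpos.2 hxc)
  have hfactor : ∀ c, h x - h c = (x - c) * slope h c x := fun c => (sub_smul_slope h c x).symm
  simp_rw [hfactor, Finset.prod_mul_distrib, ← mul_assoc]
  exact mul_nonneg (hsign x) (Finset.prod_nonneg fun c _ => hslope c)

theorem card_le_encard_zeros_of_pairwiseDisjoint {G : ℝ → ℝ} (hG : Continuous G) {ι : Type*}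
    {S : Finset ι} {U : ι → Set ℝ} (hU : (S : Set ι).PairwiseDisjoint U)
    (hsign : ∀ i ∈ S, ∃ a b, a ≤ b ∧ Icc a b ⊆ U i ∧ G a * G b < 0) :
    (S.card : ℕ∞) ≤ {s | G s = 0}.encard := by
  have hzero : ∀ i ∈ S, ∃ s ∈ U i, G s = 0 := fun i hi => by
    obtain ⟨a, b, hab, hsub, hneg⟩ := hsign i hi
    have hmem : (0 : ℝ) ∈ uIcc (G a) (G b) := by
      rcases mul_neg_iff.1 hneg with ⟨ha, hb⟩ | ⟨ha, hb⟩
      exacts [mem_uIcc_of_ge hb.le ha.le, mem_uIcc_of_le ha.le hb.le]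
    obtain ⟨s, hs, hs0⟩ := intermediate_value_uIcc hG.continuousOn hmem
    exact ⟨s, hsub (uIcc_of_le hab ▸ hs), hs0⟩
  choose! s hsU hs0 using hzero
  rw [← encard_coe_eq_coe_finsetCard]
  refine encard_le_encard_of_injOn (f := s) hs0 fun i hi j hj hij => ?_
  exact hU.elim_set hi hj (s i) (hsU i hi) (hij ▸ hsU j hj)

end SignChanges

section Counting

variable {D f : ℝ → ℝ} {C : ℝ} {T : Finset ℝ}

theorem eventually_card_le_encard_integral_mul_mvDensity_eq_zero (hD : Continuous D)
    (hD₀ : ∀ x, 0 < D x) (hDC : ∀ x, D x ≤ C * (1 + x ^ 2)) (hf : Continuous f)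
    (hfT : ChangesSignExactlyAt f T) (hT : Odd T.card) :
    ∀ᶠ θ in atTop, (T.card : ℕ∞) ≤ {μ | ∫ x, f x * mvDensity D f θ μ x = 0}.encard := by
  have htop := eventually_nonneg_atTop_of_nonneg_mul_prod hfT.nonneg_mul_prod
  have hbot := eventually_nonpos_atBot_of_nonneg_mul_prod hfT.nonneg_mul_prod hT
  obtain ⟨U, hU, hdisj⟩ := T.finite_toSet.t2_separation
  choose! a b hab hsub hneg using fun c (hc : c ∈ T) =>
    hfT.exists_Icc_subset_mul_neg hc ((hU c).2.mem_nhds (hU c).1)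
  have hpos : ∀ {μ}, f μ ≠ 0 → ∀ᶠ θ in atTop, 0 < f μ * ∫ x, f x * mvDensity D f θ μ x :=
    eventually_mul_integral_mul_mvDensity_pos hD hD₀ hDC hf htop hbot
  filter_upwards [eventually_gt_atTop 0,
    (eventually_all_finset T).2 fun c hc => hpos (left_ne_zero_of_mul (hneg c hc).ne),
    (eventually_all_finset T).2 fun c hc => hpos (right_ne_zero_of_mul (hneg c hc).ne)]
    with θ hθ ha hb
  refine card_le_encard_zeros_of_pairwiseDisjoint
    (continuous_integral_mul_mvDensity hD hD₀ hDC hf htop hbot hθ) hdisj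
    fun c hc => ⟨a c, b c, hab c hc, hsub c hc, ?_⟩
  exact neg_of_mul_pos_right (a := f (a c) * f (b c))
    ((mul_pos (ha c hc) (hb c hc)).trans_eq (mul_mul_mul_comm _ _ _ _)) (hneg c hc).le

theorem encard_integral_mul_mvDensity_eq_zero_le (hD : Continuous D) (hD₀ : ∀ x, 0 < D x)
    (hDC : ∀ x, D x ≤ C * (1 + x ^ 2)) (hf : Continuous f)
    (hfT : ChangesSignExactlyAt f T) (hT : Odd T.card) {θ : ℝ}
    (hθ : 0 < θ) : {μ | ∫ x, f x * mvDensity D f θ μ x = 0}.encard ≤ T.card := by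
  set h : ℝ → ℝ := fun x => ∫ y in (0 : ℝ)..x, 2 * θ / D y
  have hcont : Continuous h := continuous_integral_div hD hD₀ continuous_const
  have hmono : StrictMono h :=
    strictMono_integral_div hD hD₀ continuous_const fun _ => by positivity
  have hpos : ∀ x, 0 < mvDensity D f θ 0 x := stationaryDensity_pos hD₀
  have hdens : Continuous (mvDensity D f θ 0) := continuous_stationaryDensity hD hD₀ (by fun_prop)
  have hint := integrable_mul_mvDensity hD hD₀ hDC hf
    (eventually_nonneg_atTop_of_nonneg_mul_prod hfT.nonneg_mul_prod)
    (eventually_nonpos_atBot_of_nonneg_mul_prod hfT.nonneg_mul_prod hT) hθ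
  simp_rw +singlePass [mul_mvDensity_eq_mul_exp hD hD₀ hf] at hint ⊢
  refine encard_zeros_integral_mul_exp_le hcont.aestronglyMeasurable h T hint
    (Eventually.of_forall fun x => ?_) fun hae => ?_
  · rw [mul_right_comm]
    exact mul_nonneg (nonneg_mul_prod_sub_of_monotone hfT.nonneg_mul_prod hmono.monotone x)
      (hpos x).le
  · have hzero : (fun x => f x * mvDensity D f θ 0 x * ∏ c ∈ T, (h x - h c)) = fun _ => 0 :=
      (Continuous.ae_eq_iff_eq volume (by fun_prop) continuous_const).1 hae
    obtain ⟨x, hfx, hxT⟩ := hfT.dense_ne_zero.exists_mem_open T.finite_toSet.isClosed.isOpen_compl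
      T.finite_toSet.infinite_compl.nonempty
    refine mul_ne_zero (mul_ne_zero hfx (hpos x).ne') ?_ (congrFun hzero x)
    exact Finset.prod_ne_zero_iff.2 fun c hc =>
      sub_ne_zero.2 (hmono.injective.ne (ne_of_mem_of_not_mem hc hxT).symm)

theorem stmt3_general (hD : Continuous D) (hD₀ : ∀ x, 0 < D x)
    (hDC : ∀ x, D x ≤ C * (1 + x ^ 2)) (hf : Continuous f)
    (hfT : ChangesSignExactlyAt f T) (hT : Odd T.card) :
    ∃ θc : ℝ, 0 < θc ∧ ∀ θ : ℝ, θc < θ → {μ | selfConsistency D f θ μ = 0}.ncard = T.card := by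
  obtain ⟨θc, hθc⟩ := eventually_atTop.1 ((eventually_gt_atTop 0).and
    (eventually_card_le_encard_integral_mul_mvDensity_eq_zero hD hD₀ hDC hf hfT hT))
  refine ⟨θc, (hθc θc le_rfl).1, fun θ hlt => ?_⟩
  obtain ⟨hθ, hlower⟩ := hθc θ hlt.le
  simp_rw [selfConsistency_eq_zero_iff hD hD₀ hDC hf
    (eventually_nonneg_atTop_of_nonneg_mul_prod hfT.nonneg_mul_prod)
    (eventually_nonpos_atBot_of_nonneg_mul_prod hfT.nonneg_mul_prod hT) hθ]
  have hupper := encard_integral_mul_mvDensity_eq_zero_le hD hD₀ hDC hf hfT hT hθ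
  rw [ncard_def, hupper.antisymm hlower, ENat.toNat_natCast]

end Counting

section Polynomial

open Polynomial

variable {p : ℝ[X]}

theorem eval_pos_of_roots_eq_zero (hlead : 0 < p.leadingCoeff) (hroots : p.roots = 0) (x : ℝ) :
    0 < p.eval x := by
  have hp : p ≠ 0 := leadingCoeff_ne_zero.1 hlead.ne'
  have hlarge : ∃ y, 0 ≤ p.eval y := by
    rcases le_or_gt p.degree 0 with hdeg | hdeg
    · refine ⟨0, ?_⟩
      rw [← coeff_zero_eq_eval_zero, ← natDegree_eq_zero_iff_degree_le_zero.2 hdeg]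
      exact hlead.le
    · exact ((p.tendsto_atTop_of_leadingCoeff_nonneg hdeg hlead.le).eventually_ge_atTop 0).exists
  by_contra! hx
  obtain ⟨z, hz⟩ := mem_range_of_exists_le_of_exists_ge p.continuous ⟨x, hx⟩ hlarge
  simpa [hroots] using (mem_roots hp).2 hz

theorem even_natDegree_of_roots_eq_zero (hroots : p.roots = 0) : Even p.natDegree := by
  wlog hlead : 0 < p.leadingCoeff generalizing p
  · rcases (not_lt.1 hlead).eq_or_lt with hzero | hneg
    · simp [leadingCoeff_eq_zero.1 hzero]
    · simpa using this (p := -p) (by simpa using hroots) (by simpa using hneg)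
  by_contra hodd
  rw [Nat.not_even_iff_odd] at hodd
  have hlim : Tendsto (fun x => (p.comp (-X)).eval x) atTop atBot := by
    refine tendsto_atBot_of_leadingCoeff_nonpos _ ?_ ?_
    · rw [degree_comp_neg_X]
      exact natDegree_pos_iff_degree_pos.1 hodd.pos
    · rw [comp_neg_X_leadingCoeff_eq, hodd.neg_one_pow]
      linarith
  obtain ⟨x, hx⟩ := (hlim.eventually_le_atBot 0).exists
  rw [eval_comp] at hx
  exact hx.not_gt (eval_pos_of_roots_eq_zero hlead hroots _)

theorem odd_card_roots (hodd : Odd p.natDegree) : Odd (Multiset.card p.roots) := by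
  obtain ⟨q, -, hdeg, hq⟩ := p.exists_prod_multiset_X_sub_C_mul
  rw [← hdeg, Nat.odd_add] at hodd
  exact hodd.2 (even_natDegree_of_roots_eq_zero hq)

theorem nodup_roots_of_eval_derivative_ne_zero
    (hsimple : ∀ x, p.eval x = 0 → (derivative p).eval x ≠ 0) : p.roots.Nodup := by
  rcases eq_or_ne p 0 with rfl | hp
  · simp
  refine Multiset.nodup_iff_count_le_one.2 fun x => ?_
  rw [count_roots]
  by_contra! hmult
  obtain ⟨hroot, hderiv⟩ := (one_lt_rootMultiplicity_iff_isRoot hp).1 hmult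
  exact hsimple x hroot hderiv

theorem ncard_setOf_eval_eq_zero (hp : p ≠ 0) :
    {x | p.eval x = 0}.ncard = p.roots.toFinset.card := by
  have hset : {x | p.eval x = 0} = p.roots.toFinset := by
    ext x
    simp [hp]
  rw [hset, ncard_coe_finset]

theorem changesSignExactlyAt_roots (hlead : 0 < p.leadingCoeff) (hnodup : p.roots.Nodup) :
    ChangesSignExactlyAt (fun x => p.eval x) p.roots.toFinset := by
  have hp : p ≠ 0 := leadingCoeff_ne_zero.1 hlead.ne'
  constructor
  · intro x
    obtain ⟨q, hfactor, -, hq⟩ := p.exists_prod_multiset_X_sub_C_mul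
    have hqlead : 0 < q.leadingCoeff := by
      rwa [← hfactor, leadingCoeff_monic_mul
        (monic_multiset_prod_of_monic _ _ fun c _ => monic_X_sub_C c)] at hlead
    have heval : p.eval x = (∏ c ∈ p.roots.toFinset, (x - c)) * q.eval x := by
      conv_lhs => rw [← hfactor]
      simp [eval_mul, eval_multiset_prod, Finset.prod, hnodup.dedup]
    rw [heval, mul_right_comm]
    exact mul_nonneg (mul_self_nonneg _) (eval_pos_of_roots_eq_zero hqlead hq x).le
  · refine (p.roots.toFinset.countable_toSet.dense_compl ℝ).mono fun x hx => ?_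
    simpa [hp] using hx

end Polynomial

/-- If V' is a real polynomial of odd degree with positive leading coefficient
having exactly N real roots, all simple, then for all sufficiently large θ the self-consistency
equation F_V(θ,σa,σm)[μ] = 0 has exactly N solutions, i.e. the Itô McKean–Vlasov SDE has exactly
N stationary measures. -/
theorem stmt3 (V' : Polynomial ℝ) (N : ℕ) (σa σm : ℝ) (hσa : 0 < σa) (hσm : 0 < σm)
    (hodd : Odd V'.natDegree) (hlead : 0 < V'.leadingCoeff)
    (hroots : {x : ℝ | V'.eval x = 0}.ncard = N)
    (hsimple : ∀ x : ℝ, V'.eval x = 0 → (Polynomial.derivative V').eval x ≠ 0) :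
    ∃ θc : ℝ, 0 < θc ∧ ∀ θ : ℝ, θc < θ →
      {μ : ℝ | FV V' θ σa σm μ = 0}.ncard = N := by
  have hnodup := nodup_roots_of_eval_derivative_ne_zero hsimple
  rw [← hroots, ncard_setOf_eval_eq_zero (Polynomial.leadingCoeff_ne_zero.1 hlead.ne')]
  exact stmt3_general (D := fun y => σa ^ 2 + σm ^ 2 * y ^ 2) (C := σa ^ 2 + σm ^ 2)
    (by fun_prop) (fun x => by positivity) (fun x => by nlinarith [sq_nonneg (σa * x)])
    V'.continuous (changesSignExactlyAt_roots hlead hnodup)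
    (Multiset.toFinset_card_of_nodup hnodup ▸ odd_card_roots hodd)
end

section
/- Let a ≤ 0, ν ∈ [0,1), σa > 0 and σm > 0 satisfy a + (1−ν)·σm² > 0. Then there exists θ_c > 0 such that for every θ > θ_c the equation F(ν,σa,σm,a,θ)[μ] = 0 has exactly three solutions μ ∈ ℝ; that is, multiplicative noise under a non-Itô interpretation induces a stable phase even when the potential x⁴/4 − a·x²/2 is convex. -/
open MeasureTheory Real Set Filter

/-- Unnormalised stationary density ρ0[μ](x) of the McKean–Vlasov SDE
`dX = (aX − X³ − θ(X − m₁))dt + σa dB¹ + σm X ∘_ν dB²`. -/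
noncomputable def rho0 (ν σa σm a θ μ x : ℝ) : ℝ :=
  Real.exp (((a - θ - ν * σm ^ 2 + σa ^ 2 / σm ^ 2) / σm ^ 2) *
      Real.log (1 + (σm ^ 2 / σa ^ 2) * x ^ 2) +
    (2 * θ * μ / (σa * σm)) * Real.arctan (σm * x / σa) - x ^ 2 / σm ^ 2)

/-- Normalisation constant Z[μ] = ∫ ρ0[μ]. -/
noncomputable def Z (ν σa σm a θ μ : ℝ) : ℝ := ∫ x : ℝ, rho0 ν σa σm a θ μ x

/-- Self-consistency function F(ν,σa,σm,a,θ)[μ] = (∫ (x−μ)·ρ0[μ]) / Z[μ]. -/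
noncomputable def F (ν σa σm a θ μ : ℝ) : ℝ :=
  (∫ x : ℝ, (x - μ) * rho0 ν σa σm a θ μ x) / Z ν σa σm a θ μ

/-- F'_μ[0] : the derivative at μ = 0 of μ ↦ F(ν,σa,σm,a,θ)[μ]. -/
noncomputable def Fmu' (ν σa σm a θ : ℝ) : ℝ := deriv (fun μ => F ν σa σm a θ μ) 0

/-!
Integrating the zero-flux Fokker–Planck equation turns `F = 0` into `∫ (b x - x³) ρ0[μ] dx = 0`
with `b = a + (1 - ν) σm²`. By parity this says that `S h = ∫ g(x) sinh (h φ(x)) dx` vanishes at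
`h = 2θμ / (σa σm)`, where `φ(x) = arctan (σm |x| / σa)` and `g(x) = (b |x| - |x|³) ρ0[0](x)`
changes sign only once, at the value `φ = y₀` corresponding to `|x| = √b`.

Since `sinh (h₂ y) / sinh (h₁ y)` increases with `y > 0` for `0 < h₁ < h₂`, the function
`h ↦ S h / sinh (h y₀)` is strictly decreasing on `h > 0`, so `S` has at most one positive zero.
It is negative for large `h`, where the part `φ > y₀` dominates. For large `θ` the density
concentrates near `0`, where `g ≥ 0`, and `S 1 > 0`. So `S` has exactly one positive zero, and it
is odd.
-/

open scoped Polynomial Topology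

theorem sinh_add_eq_sinh_mul_exp_add (u v : ℝ) :
    sinh (u + v) = sinh u * exp v + exp (-u) * sinh v := by
  rw [sinh_add, ← cosh_add_sinh v, ← cosh_sub_sinh u]
  ring

theorem hasDerivAt_const_mul_sinh (k y : ℝ) :
    HasDerivAt (fun y => sinh (k * y)) (k * cosh (k * y)) y := by
  simpa [mul_comm] using ((hasDerivAt_id y).const_mul k).sinh

theorem hasDerivAt_const_mul_cosh (k y : ℝ) :
    HasDerivAt (fun y => cosh (k * y)) (k * sinh (k * y)) y := by
  simpa [mul_comm] using ((hasDerivAt_id y).const_mul k).cosh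

section Hyperbolic

variable {h₁ h₂ y y' : ℝ}

theorem mul_sinh_mul_cosh_lt (h₁_pos : 0 < h₁) (h₁₂ : h₁ < h₂) (hy : 0 < y) :
    h₁ * (sinh (h₂ * y) * cosh (h₁ * y)) < h₂ * (cosh (h₂ * y) * sinh (h₁ * y)) := by
  let D : ℝ → ℝ := fun y =>
    h₂ * (cosh (h₂ * y) * sinh (h₁ * y)) - h₁ * (sinh (h₂ * y) * cosh (h₁ * y))
  have hD (y : ℝ) : HasDerivAt D ((h₂ ^ 2 - h₁ ^ 2) * (sinh (h₂ * y) * sinh (h₁ * y))) y := by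
    refine ((((hasDerivAt_const_mul_cosh h₂ y).mul (hasDerivAt_const_mul_sinh h₁ y)).const_mul
      h₂).sub (((hasDerivAt_const_mul_sinh h₂ y).mul
        (hasDerivAt_const_mul_cosh h₁ y)).const_mul h₁)).congr_deriv ?_
    ring
  have D_mono : StrictMonoOn D (Ici 0) := by
    refine strictMonoOn_of_deriv_pos (convex_Ici 0) (by fun_prop) fun x hx => ?_
    rw [interior_Ici, mem_Ioi] at hx
    have h₂_pos : 0 < h₂ := h₁_pos.trans h₁₂
    rw [(hD x).deriv]
    exact mul_pos (sub_pos.2 (by gcongr)) (mul_pos (sinh_pos_iff.2 (by positivity))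
      (sinh_pos_iff.2 (by positivity)))
  have : D 0 < D y := D_mono self_mem_Ici hy.le hy
  simpa [D] using this

theorem strictMonoOn_sinh_div_sinh (h₁_pos : 0 < h₁) (h₁₂ : h₁ < h₂) :
    StrictMonoOn (fun y => sinh (h₂ * y) / sinh (h₁ * y)) (Ioi 0) := by
  have sinh₁ {y : ℝ} (hy : 0 < y) : 0 < sinh (h₁ * y) := sinh_pos_iff.2 (by positivity)
  refine strictMonoOn_of_deriv_pos (convex_Ioi 0) (ContinuousOn.div (by fun_prop) (by fun_prop)
    fun y hy => (sinh₁ hy).ne') fun y hy => ?_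
  rw [interior_Ioi, mem_Ioi] at hy
  rw [((hasDerivAt_const_mul_sinh h₂ y).fun_div (hasDerivAt_const_mul_sinh h₁ y)
    (sinh₁ hy).ne').deriv]
  have := mul_sinh_mul_cosh_lt h₁_pos h₁₂ hy
  exact div_pos (by linarith) (pow_pos (sinh₁ hy) 2)

theorem sinh_mul_sinh_lt (h₁_pos : 0 < h₁) (h₁₂ : h₁ < h₂) (hy : 0 < y) (hyy' : y < y') :
    sinh (h₂ * y) * sinh (h₁ * y') < sinh (h₂ * y') * sinh (h₁ * y) := by
  have hy' : 0 < y' := hy.trans hyy'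
  have ratio_lt := strictMonoOn_sinh_div_sinh h₁_pos h₁₂ hy hy' hyy'
  exact (div_lt_div_iff₀ (sinh_pos_iff.2 (by positivity)) (sinh_pos_iff.2 (by positivity))).1
    ratio_lt

end Hyperbolic

section SingleCrossing

variable {α : Type*} [MeasurableSpace α] {m : Measure α} {g φ : α → ℝ} {y₀ C : ℝ}

/-- `g` is nonnegative where `φ < y₀` and nonpositive where `φ > y₀`, and the downward crossing is
genuine: `g < 0` on a non-null part of `{φ > y₀}`. -/
structure SingleCrossing (m : Measure α) (g φ : α → ℝ) (y₀ : ℝ) : Prop where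
  mul_sub_nonpos : ∀ x, g x * (φ x - y₀) ≤ 0
  measure_pos : 0 < m {x | g x < 0 ∧ y₀ < φ x}

namespace SingleCrossing

theorem nonneg_of_lt (hcross : SingleCrossing m g φ y₀) {x : α} (hx : φ x < y₀) : 0 ≤ g x :=
  nonneg_of_mul_nonpos_left (hcross.mul_sub_nonpos x) (sub_neg.2 hx)

theorem nonpos_of_gt (hcross : SingleCrossing m g φ y₀) {x : α} (hx : y₀ < φ x) : g x ≤ 0 :=
  nonpos_of_mul_nonpos_left (hcross.mul_sub_nonpos x) (sub_pos.2 hx)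

end SingleCrossing

theorem integral_pos_of_measure_pos {f : α → ℝ} {s : Set α} (hf : Integrable f m)
    (hf_nonneg : ∀ x, 0 ≤ f x) (hs : 0 < m s) (hf_pos : ∀ x ∈ s, 0 < f x) : 0 < ∫ x, f x ∂m :=
  (integral_pos_iff_support_of_nonneg hf_nonneg hf).2
    (hs.trans_le (measure_mono fun x hx => (hf_pos x hx).ne'))

theorem integrable_mul_exp_mul (hg : Integrable g m) (hφ : AEStronglyMeasurable φ m)
    (hφC : ∀ x, φ x ≤ C) {t : ℝ} (ht : 0 ≤ t) : Integrable (fun x => g x * exp (t * φ x)) m := by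
  refine hg.mul_bdd (c := exp (t * C))
    (continuous_exp.comp_aestronglyMeasurable (hφ.const_mul t)) (.of_forall fun x => ?_)
  rw [norm_of_nonneg (exp_pos _).le, exp_le_exp]
  exact mul_le_mul_of_nonneg_left (hφC x) ht

namespace SingleCrossing

theorem mul_max_sub_nonpos (hcross : SingleCrossing m g φ y₀) (x : α) :
    g x * max (φ x - y₀) 0 ≤ 0 := by
  rcases le_total (φ x - y₀) 0 with hx | hx
  · simp [max_eq_right hx]
  · simpa only [max_eq_left hx] using hcross.mul_sub_nonpos x

theorem integral_mul_max_sub_neg (hcross : SingleCrossing m g φ y₀)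
    (hint : Integrable (fun x => g x * max (φ x - y₀) 0) m) :
    ∫ x, g x * max (φ x - y₀) 0 ∂m < 0 := by
  have : 0 < ∫ x, -(g x * max (φ x - y₀) 0) ∂m := by
    refine integral_pos_of_measure_pos hint.neg
      (fun x => neg_nonneg.2 (hcross.mul_max_sub_nonpos x)) hcross.measure_pos ?_
    rintro x ⟨hgx, hx⟩
    simpa only [max_eq_left (sub_pos.2 hx).le, neg_pos] using
      mul_neg_of_neg_of_pos hgx (sub_pos.2 hx)
  simpa only [integral_neg, neg_pos] using this

theorem mul_exp_le (hcross : SingleCrossing m g φ y₀) {t : ℝ} (ht : 0 ≤ t) (x : α) :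
    g x * exp (t * (φ x - y₀)) ≤ g x + t * (g x * max (φ x - y₀) 0) := by
  rcases lt_trichotomy (φ x) y₀ with hx | hx | hx
  · have hx' : φ x - y₀ ≤ 0 := (sub_neg.2 hx).le
    have : exp (t * (φ x - y₀)) ≤ 1 := exp_le_one_iff.2 (mul_nonpos_of_nonneg_of_nonpos ht hx')
    simpa [max_eq_right hx'] using mul_le_of_le_one_right (hcross.nonneg_of_lt hx) this
  · simp [hx]
  · have := mul_le_mul_of_nonpos_left (add_one_le_exp (t * (φ x - y₀))) (hcross.nonpos_of_gt hx)
    rw [max_eq_left (sub_pos.2 hx).le]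
    linarith

end SingleCrossing

theorem eventually_integral_mul_exp_neg (hg : Integrable g m) (hφ : AEStronglyMeasurable φ m)
    (hφC : ∀ x, φ x ≤ C) (hcross : SingleCrossing m g φ y₀) :
    ∀ᶠ t in atTop, ∫ x, g x * exp (t * (φ x - y₀)) ∂m < 0 := by
  let k : α → ℝ := fun x => g x * max (φ x - y₀) 0
  have hφ_sub : AEStronglyMeasurable (fun x => φ x - y₀) m := hφ.sub aestronglyMeasurable_const
  have hφC_sub (x : α) : φ x - y₀ ≤ C - y₀ := sub_le_sub_right (hφC x) y₀
  have hk : Integrable k m := by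
    refine hg.mul_bdd (c := max (C - y₀) 0) (hφ_sub.sup aestronglyMeasurable_const)
      (.of_forall fun x => ?_)
    rw [norm_of_nonneg (le_max_right _ _)]
    exact max_le_max_right 0 (hφC_sub x)
  have lim : Tendsto (fun t => ∫ x, g x ∂m + t * ∫ x, k x ∂m) atTop atBot :=
    tendsto_atBot_add_const_left _ _
      (tendsto_id.atTop_mul_const_of_neg (hcross.integral_mul_max_sub_neg hk))
  filter_upwards [lim.eventually_lt_atBot 0, eventually_ge_atTop 0] with t bound_neg ht
  calc ∫ x, g x * exp (t * (φ x - y₀)) ∂m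
      ≤ ∫ x, (g x + t * k x) ∂m :=
        integral_mono (integrable_mul_exp_mul hg hφ_sub hφC_sub ht) (hg.add (hk.const_mul t))
          (hcross.mul_exp_le ht)
    _ = ∫ x, g x ∂m + t * ∫ x, k x ∂m := by
      rw [integral_add hg (hk.const_mul t), integral_const_mul]
    _ < 0 := bound_neg

/-- The odd transform `h ↦ ∫ g sinh (h φ)`. In the rescaled unknown `h = 2θμ / (σa σm)`, the
self-consistency equation says that such a transform vanishes. -/
noncomputable def sinhTransform (m : Measure α) (g φ : α → ℝ) (h : ℝ) : ℝ :=
  ∫ x, g x * sinh (h * φ x) ∂m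

theorem sinhTransform_zero : sinhTransform m g φ 0 = 0 := by
  simp [sinhTransform]

theorem sinhTransform_neg (h : ℝ) : sinhTransform m g φ (-h) = -sinhTransform m g φ h := by
  simp only [sinhTransform, neg_mul, sinh_neg, mul_neg, integral_neg]

theorem abs_sinh_mul_le {h M y C : ℝ} (hM : |h| ≤ M) (hC : |y| ≤ C) :
    |sinh (h * y)| ≤ sinh (M * C) := by
  rw [abs_sinh, sinh_le_sinh, abs_mul]
  gcongr
  exact (abs_nonneg h).trans hM

theorem integrable_mul_sinh (hg : Integrable g m) (hφ : AEStronglyMeasurable φ m)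
    (hφC : ∀ x, |φ x| ≤ C) (h : ℝ) : Integrable (fun x => g x * sinh (h * φ x)) m :=
  hg.mul_bdd (continuous_sinh.comp_aestronglyMeasurable (hφ.const_mul h))
    (.of_forall fun x => abs_sinh_mul_le le_rfl (hφC x))

theorem continuous_sinhTransform (hg : Integrable g m) (hφ : AEStronglyMeasurable φ m)
    (hφC : ∀ x, |φ x| ≤ C) : Continuous (sinhTransform m g φ) := by
  refine continuous_iff_continuousAt.2 fun h₀ => ?_
  have near : ∀ᶠ h in 𝓝 h₀, |h| ≤ |h₀| + 1 :=
    (continuous_abs.continuousAt.eventually_lt continuousAt_const (lt_add_one |h₀|)).mono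
      fun _ => le_of_lt
  refine continuousAt_of_dominated (bound := fun x => ‖g x‖ * sinh ((|h₀| + 1) * C))
    (.of_forall fun h => (integrable_mul_sinh hg hφ hφC h).aestronglyMeasurable) ?_
    (hg.norm.mul_const _) (.of_forall fun x => by fun_prop)
  filter_upwards [near] with h hh
  refine .of_forall fun x => ?_
  rw [norm_mul]
  gcongr
  exact abs_sinh_mul_le hh (hφC x)

theorem eventually_sinhTransform_neg (hg : Integrable g m) (hφ : AEStronglyMeasurable φ m)
    (hφC : ∀ x, |φ x| ≤ C) (hy₀ : 0 < y₀) (hcross : SingleCrossing m g φ y₀) :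
    ∀ᶠ h in atTop, sinhTransform m g φ h < 0 := by
  have φ_le (x : α) : φ x ≤ C := (le_abs_self _).trans (hφC x)
  filter_upwards [eventually_integral_mul_exp_neg hg hφ φ_le hcross, eventually_gt_atTop 0]
    with h exp_neg h_pos
  have g_sinh_nonpos (x : α) : g x * sinh (h * (φ x - y₀)) ≤ 0 := by
    rcases lt_trichotomy (φ x) y₀ with hx | hx | hx
    · exact mul_nonpos_of_nonneg_of_nonpos (hcross.nonneg_of_lt hx)
        (sinh_nonpos_iff.2 (mul_nonpos_of_nonneg_of_nonpos h_pos.le (sub_neg.2 hx).le))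
    · simp [hx]
    · exact mul_nonpos_of_nonpos_of_nonneg (hcross.nonpos_of_gt hx)
        (sinh_nonneg_iff.2 (mul_nonneg h_pos.le (sub_pos.2 hx).le))
  have sinh_le (x : α) :
      g x * sinh (h * φ x) ≤ sinh (h * y₀) * (g x * exp (h * (φ x - y₀))) := by
    have := sinh_add_eq_sinh_mul_exp_add (h * y₀) (h * (φ x - y₀))
    rw [show h * φ x = h * y₀ + h * (φ x - y₀) by ring, this]
    have := mul_nonpos_of_nonneg_of_nonpos (exp_pos (-(h * y₀))).le (g_sinh_nonpos x)
    linarith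
  have int_exp : Integrable (fun x => g x * exp (h * (φ x - y₀))) m :=
    integrable_mul_exp_mul hg (hφ.sub aestronglyMeasurable_const)
      (fun x => sub_le_sub_right (φ_le x) y₀) h_pos.le
  calc sinhTransform m g φ h
      ≤ ∫ x, sinh (h * y₀) * (g x * exp (h * (φ x - y₀))) ∂m :=
        integral_mono (integrable_mul_sinh hg hφ hφC h) (int_exp.const_mul _) sinh_le
    _ = sinh (h * y₀) * ∫ x, g x * exp (h * (φ x - y₀)) ∂m := integral_const_mul _ _
    _ < 0 := mul_neg_of_pos_of_neg (sinh_pos_iff.2 (mul_pos h_pos hy₀)) exp_neg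

theorem sinhTransform_mul_sinh_lt (hg : Integrable g m) (hφ : AEStronglyMeasurable φ m)
    (hφC : ∀ x, |φ x| ≤ C) (hφ_nonneg : ∀ x, 0 ≤ φ x) (hy₀ : 0 < y₀)
    (hcross : SingleCrossing m g φ y₀) {h₁ h₂ : ℝ} (h₁_pos : 0 < h₁) (h₁₂ : h₁ < h₂) :
    sinhTransform m g φ h₂ * sinh (h₁ * y₀) < sinhTransform m g φ h₁ * sinh (h₂ * y₀) := by
  have int_sinh := integrable_mul_sinh hg hφ hφC
  let D : α → ℝ := fun x =>
    g x * (sinh (h₁ * φ x) * sinh (h₂ * y₀) - sinh (h₂ * φ x) * sinh (h₁ * y₀))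
  have D_eq : D = fun x => g x * sinh (h₁ * φ x) * sinh (h₂ * y₀) -
      g x * sinh (h₂ * φ x) * sinh (h₁ * y₀) := by
    ext x
    ring
  have hD : Integrable D m :=
    D_eq ▸ ((int_sinh h₁).mul_const _).sub ((int_sinh h₂).mul_const _)
  have D_nonneg (x : α) : 0 ≤ D x := by
    rcases lt_trichotomy (φ x) y₀ with hx | hx | hx
    · rcases (hφ_nonneg x).eq_or_lt with h0 | h0
      · simp [D, ← h0]
      · exact mul_nonneg (hcross.nonneg_of_lt hx)
          (by linarith [sinh_mul_sinh_lt h₁_pos h₁₂ h0 hx])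
    · simp [D, hx, mul_comm]
    · exact mul_nonneg_of_nonpos_of_nonpos (hcross.nonpos_of_gt hx)
        (by linarith [sinh_mul_sinh_lt h₁_pos h₁₂ hy₀ hx])
  have integral_D_pos : 0 < ∫ x, D x ∂m := by
    refine integral_pos_of_measure_pos hD D_nonneg hcross.measure_pos ?_
    rintro x ⟨hgx, hx⟩
    exact mul_pos_of_neg_of_neg hgx (by linarith [sinh_mul_sinh_lt h₁_pos h₁₂ hy₀ hx])
  rw [D_eq, integral_sub ((int_sinh h₁).mul_const _) ((int_sinh h₂).mul_const _),
    integral_mul_const, integral_mul_const] at integral_D_pos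
  exact sub_pos.1 integral_D_pos

theorem ncard_zeros_sinhTransform (hg : Integrable g m) (hφ : AEStronglyMeasurable φ m)
    (hφC : ∀ x, |φ x| ≤ C) (hφ_nonneg : ∀ x, 0 ≤ φ x) (hy₀ : 0 < y₀)
    (hcross : SingleCrossing m g φ y₀) {h₁ : ℝ} (h₁_pos : 0 < h₁)
    (hS : 0 < sinhTransform m g φ h₁) : {h | sinhTransform m g φ h = 0}.ncard = 3 := by
  obtain ⟨h₂, hS₂, h₁₂⟩ := ((eventually_sinhTransform_neg hg hφ hφC hy₀ hcross).and
    (eventually_gt_atTop h₁)).exists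
  obtain ⟨h₀, ⟨h₁₀, -⟩, hS₀⟩ := intermediate_value_Icc' h₁₂.le
    (continuous_sinhTransform hg hφ hφC).continuousOn ⟨hS₂.le, hS.le⟩
  have h₀_pos : 0 < h₀ := h₁_pos.trans_le h₁₀
  have not_two_zeros {h h' : ℝ} (hh : 0 < h) (hhh' : h < h')
      (hz : sinhTransform m g φ h = 0) : sinhTransform m g φ h' ≠ 0 := fun hz' => by
    simpa [hz, hz'] using sinhTransform_mul_sinh_lt hg hφ hφC hφ_nonneg hy₀ hcross hh hhh'
  have eq_h₀ {h : ℝ} (hh : 0 < h) (hz : sinhTransform m g φ h = 0) : h = h₀ := by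
    rcases lt_trichotomy h h₀ with hlt | heq | hgt
    · exact absurd hS₀ (not_two_zeros hh hlt hz)
    · exact heq
    · exact absurd hz (not_two_zeros h₀_pos hgt hS₀)
  refine ncard_eq_three.2 ⟨0, h₀, -h₀, h₀_pos.ne, by linarith, by linarith, ?_⟩
  ext h
  simp only [mem_ofPred_eq, mem_insert_iff, mem_singleton_iff]
  constructor
  · intro hz
    rcases lt_trichotomy h 0 with hneg | rfl | hpos
    · have hz' : sinhTransform m g φ (-h) = 0 := by rw [sinhTransform_neg, hz, neg_zero]
      exact .inr (.inr (neg_eq_iff_eq_neg.1 (eq_h₀ (neg_pos.2 hneg) hz')))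
    · exact .inl rfl
    · exact .inr (.inl (eq_h₀ hpos hz))
  · rintro (rfl | rfl | rfl)
    · exact sinhTransform_zero
    · exact hS₀
    · rw [sinhTransform_neg, hS₀, neg_zero]

end SingleCrossing

section Integrability

theorem abs_arctan_le (x : ℝ) : |arctan x| ≤ π / 2 :=
  abs_le.2 ⟨(neg_pi_div_two_lt_arctan x).le, (arctan_lt_pi_div_two x).le⟩

theorem integral_mul_exp_eq_integral_mul_sinh {f k : ℝ → ℝ} (hf : f.Odd) (hk : k.Odd)
    (hfk : Integrable fun x => f x * exp (k x)) :
    ∫ x, f x * exp (k x) = ∫ x, f x * sinh (k x) := by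
  have reflect : (fun x => f (-x) * exp (k (-x))) = fun x => -(f x * exp (-k x)) := by
    ext x
    rw [hf x, hk x, neg_mul]
  have int_neg : Integrable fun x => f x * exp (-k x) := by
    have := hfk.comp_neg
    rwa [reflect, integrable_fun_neg_iff] at this
  have reflected : ∫ x, f x * exp (-k x) = -∫ x, f x * exp (k x) := by
    rw [← integral_neg_eq_self (fun x => f x * exp (k x)), reflect, integral_neg, neg_neg]
  have split (x : ℝ) : f x * sinh (k x) = (f x * exp (k x) - f x * exp (-k x)) / 2 := by
    rw [sinh_eq]
    ring
  simp only [split]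
  rw [integral_div, integral_sub hfk int_neg, reflected]
  ring

theorem integrable_eval_mul_exp_neg_mul_sq {s : ℝ} (hs : 0 < s) (p : ℝ[X]) :
    Integrable fun x => p.eval x * exp (-s * x ^ 2) := by
  induction p using Polynomial.induction_on' with
  | add p q hp hq => simpa only [Polynomial.eval_add, add_mul] using hp.fun_add hq
  | monomial n r =>
    have := integrable_rpow_mul_exp_neg_mul_sq hs (s := n) (by linarith [n.cast_nonneg (α := ℝ)])
    simpa only [Polynomial.eval_monomial, rpow_natCast, mul_assoc] using this.const_mul r

theorem exp_mul_log_le_pow {u A : ℝ} {n : ℕ} (hu : 1 ≤ u) (hA : A ≤ n) :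
    exp (A * log u) ≤ u ^ n := by
  have u_pos : 0 < u := one_pos.trans_le hu
  calc exp (A * log u) ≤ exp (n * log u) :=
        exp_le_exp.2 (mul_le_mul_of_nonneg_right hA (log_nonneg hu))
    _ = u ^ n := by rw [exp_nat_mul, exp_log u_pos]

theorem integrable_eval_mul_exp_log_sub {κ s : ℝ} (hκ : 0 ≤ κ) (hs : 0 < s) (A : ℝ) (p : ℝ[X]) :
    Integrable fun x => p.eval x * exp (A * log (1 + κ * x ^ 2) - s * x ^ 2) := by
  obtain ⟨n, hn⟩ := exists_nat_ge A
  let q : ℝ[X] := (1 + Polynomial.C κ * Polynomial.X ^ 2) ^ n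
  refine (integrable_eval_mul_exp_neg_mul_sq hs (p * q)).mono ?_ (.of_forall fun x => ?_)
  · have : Continuous fun x : ℝ => log (1 + κ * x ^ 2) :=
      Continuous.log (by fun_prop) fun x => by positivity
    exact Continuous.aestronglyMeasurable (by fun_prop)
  · have hq : q.eval x = (1 + κ * x ^ 2) ^ n := by simp [q]
    have hx : 1 ≤ 1 + κ * x ^ 2 := le_add_of_nonneg_right (by positivity)
    rw [Polynomial.eval_mul, mul_assoc, norm_mul, norm_mul, hq, norm_of_nonneg (exp_pos _).le,
      norm_of_nonneg (mul_pos (pow_pos (by positivity) n) (exp_pos _)).le, sub_eq_add_neg, exp_add,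
      neg_mul]
    gcongr
    exact exp_mul_log_le_pow hx hn

end Integrability

section StationaryDensity

variable {ν σa σm a θ r : ℝ}

/-- The potential force `a x - x³` together with the noise-induced drift `(1 - ν) σm² x`. It
vanishes on average in every stationary state. -/
noncomputable def effectiveDrift (ν σm a x : ℝ) : ℝ := (a + (1 - ν) * σm ^ 2) * x - x ^ 3

theorem effectiveDrift_odd (ν σm a : ℝ) : (effectiveDrift ν σm a).Odd := fun x => by
  simp only [effectiveDrift]
  ring

theorem rho0_pos (ν σa σm a θ μ x : ℝ) : 0 < rho0 ν σa σm a θ μ x := exp_pos _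

theorem rho0_zero_even (ν σa σm a θ : ℝ) : (rho0 ν σa σm a θ 0).Even := fun x => by
  simp [rho0]

theorem rho0_eq_rho0_zero_mul_exp (ν σa σm a θ μ x : ℝ) :
    rho0 ν σa σm a θ μ x =
      rho0 ν σa σm a θ 0 x * exp (2 * θ * μ / (σa * σm) * arctan (σm * x / σa)) := by
  rw [rho0, rho0, ← exp_add]
  ring_nf

/-- The logarithm of the diffusion coefficient `σa² + σm² x²`, normalised to vanish at `0`. -/
noncomputable def logDiffusion (σa σm x : ℝ) : ℝ := log (1 + σm ^ 2 / σa ^ 2 * x ^ 2)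

theorem logDiffusion_nonneg (σa σm x : ℝ) : 0 ≤ logDiffusion σa σm x :=
  log_nonneg (le_add_of_nonneg_right (by positivity))

theorem logDiffusion_abs (σa σm x : ℝ) : logDiffusion σa σm |x| = logDiffusion σa σm x := by
  simp only [logDiffusion, sq_abs]

theorem strictMonoOn_logDiffusion (hσa : σa ≠ 0) (hσm : σm ≠ 0) :
    StrictMonoOn (logDiffusion σa σm) (Ici 0) := fun x (hx : 0 ≤ x) y _ hxy =>
  log_lt_log (by positivity) (by gcongr)

theorem measurable_logDiffusion (σa σm : ℝ) : Measurable (logDiffusion σa σm) := by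
  unfold logDiffusion
  fun_prop

theorem rho0_zero_eq_mul_exp_logDiffusion (ν σa σm a θ x : ℝ) :
    rho0 ν σa σm a θ 0 x =
      rho0 ν σa σm a 0 0 x * exp (-(θ / σm ^ 2 * logDiffusion σa σm x)) := by
  rw [rho0, rho0, logDiffusion, ← exp_add]
  ring_nf

theorem integrable_eval_mul_rho0 (hσm : σm ≠ 0) (ν σa a θ μ : ℝ) (p : ℝ[X]) :
    Integrable fun x => p.eval x * rho0 ν σa σm a θ μ x := by
  let A : ℝ := (a - θ - ν * σm ^ 2 + σa ^ 2 / σm ^ 2) / σm ^ 2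
  let k : ℝ := 2 * θ * μ / (σa * σm)
  have weight := integrable_eval_mul_exp_log_sub (κ := σm ^ 2 / σa ^ 2) (s := 1 / σm ^ 2)
    (by positivity) (by positivity) A p
  have tilted := integrable_mul_exp_mul (φ := fun x => k * arctan (σm * x / σa))
    (C := |k| * (π / 2)) weight (Continuous.aestronglyMeasurable (by fun_prop)) (fun x => by
      refine (le_abs_self _).trans ?_
      rw [abs_mul]
      gcongr
      exact abs_arctan_le _) zero_le_one
  refine tilted.congr (.of_forall fun x => ?_)
  simp only [rho0, mul_assoc, ← exp_add, A, k]
  ring_nf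

theorem Z_pos (hσm : σm ≠ 0) (ν σa a θ μ : ℝ) : 0 < Z ν σa σm a θ μ := by
  refine integral_pos_of_measure_pos (s := univ) ?_ (fun x => (rho0_pos ..).le) (by simp)
    (fun x _ => rho0_pos ..)
  simpa using integrable_eval_mul_rho0 hσm ν σa a θ μ 1

theorem integrable_effectiveDrift_mul_rho0 (hσm : σm ≠ 0) (ν σa a θ μ : ℝ) :
    Integrable fun x => effectiveDrift ν σm a x * rho0 ν σa σm a θ μ x := by
  let p : ℝ[X] := Polynomial.C (a + (1 - ν) * σm ^ 2) * Polynomial.X - Polynomial.X ^ 3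
  have hp (x : ℝ) : p.eval x = effectiveDrift ν σm a x := by simp [p, effectiveDrift]
  simpa only [hp] using integrable_eval_mul_rho0 hσm ν σa a θ μ p

theorem integrable_sub_mul_rho0 (hσm : σm ≠ 0) (ν σa a θ μ : ℝ) :
    Integrable fun x => (x - μ) * rho0 ν σa σm a θ μ x := by
  let p : ℝ[X] := Polynomial.X - Polynomial.C μ
  have hp (x : ℝ) : p.eval x = x - μ := by simp [p]
  simpa only [hp] using integrable_eval_mul_rho0 hσm ν σa a θ μ p

theorem integrable_diffusion_mul_rho0 (hσm : σm ≠ 0) (ν σa a θ μ : ℝ) :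
    Integrable fun x => (σa ^ 2 + σm ^ 2 * x ^ 2) * rho0 ν σa σm a θ μ x := by
  let p : ℝ[X] := Polynomial.C (σa ^ 2) + Polynomial.C (σm ^ 2) * Polynomial.X ^ 2
  have hp (x : ℝ) : p.eval x = σa ^ 2 + σm ^ 2 * x ^ 2 := by simp [p]
  simpa only [hp] using integrable_eval_mul_rho0 hσm ν σa a θ μ p

theorem hasDerivAt_rho0 (hσa : σa ≠ 0) (ν σm a θ μ x : ℝ) :
    HasDerivAt (rho0 ν σa σm a θ μ)
      (rho0 ν σa σm a θ μ x *
        ((a - θ - ν * σm ^ 2 + σa ^ 2 / σm ^ 2) / σm ^ 2 *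
            (σm ^ 2 / σa ^ 2 * (2 * x) / (1 + σm ^ 2 / σa ^ 2 * x ^ 2)) +
          2 * θ * μ / (σa * σm) * (σm / σa / (1 + σm ^ 2 / σa ^ 2 * x ^ 2)) -
          2 * x / σm ^ 2)) x := by
  have log_pos : 0 < 1 + σm ^ 2 / σa ^ 2 * x ^ 2 := by positivity
  have hsq : HasDerivAt (fun x : ℝ => x ^ 2) (2 * x) x := by simpa using hasDerivAt_pow 2 x
  have hlog := ((hsq.const_mul (σm ^ 2 / σa ^ 2)).const_add 1).log log_pos.ne'
  have harctan : HasDerivAt (fun x => arctan (σm * x / σa))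
      (σm / σa / (1 + σm ^ 2 / σa ^ 2 * x ^ 2)) x := by
    refine (((hasDerivAt_id' x).const_mul σm).div_const σa).arctan.congr_deriv ?_
    ring
  exact (((hlog.const_mul _).fun_add (harctan.const_mul _)).fun_sub (hsq.div_const (σm ^ 2))).exp

-- The stationary Fokker–Planck equation with zero flux.
theorem hasDerivAt_diffusion_mul_rho0 (hσa : σa ≠ 0) (hσm : σm ≠ 0) (ν a θ μ x : ℝ) :
    HasDerivAt (fun x => (σa ^ 2 + σm ^ 2 * x ^ 2) * rho0 ν σa σm a θ μ x)
      (2 * (effectiveDrift ν σm a x * rho0 ν σa σm a θ μ x -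
        θ * ((x - μ) * rho0 ν σa σm a θ μ x))) x := by
  have hdiff : HasDerivAt (fun x : ℝ => σa ^ 2 + σm ^ 2 * x ^ 2) (σm ^ 2 * (2 * x)) x := by
    simpa using ((hasDerivAt_pow 2 x).const_mul (σm ^ 2)).const_add (σa ^ 2)
  refine (hdiff.fun_mul (hasDerivAt_rho0 hσa ν σm a θ μ x)).congr_deriv ?_
  rw [effectiveDrift]
  field_simp
  ring

theorem integral_effectiveDrift_mul_rho0 (hσa : σa ≠ 0) (hσm : σm ≠ 0) (ν a θ μ : ℝ) :
    ∫ x, effectiveDrift ν σm a x * rho0 ν σa σm a θ μ x =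
      θ * ∫ x, (x - μ) * rho0 ν σa σm a θ μ x := by
  have int_drift := integrable_effectiveDrift_mul_rho0 hσm ν σa a θ μ
  have int_coupling := (integrable_sub_mul_rho0 hσm ν σa a θ μ).const_mul θ
  have := integral_eq_zero_of_hasDerivAt_of_integrable
    (hasDerivAt_diffusion_mul_rho0 hσa hσm ν a θ μ) ((int_drift.sub int_coupling).const_mul 2)
    (integrable_diffusion_mul_rho0 hσm ν σa a θ μ)
  rw [integral_const_mul, integral_sub int_drift int_coupling, integral_const_mul] at this
  linarith

theorem F_eq_zero_iff (hσa : σa ≠ 0) (hσm : σm ≠ 0) (hθ : θ ≠ 0) (ν a μ : ℝ) :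
    F ν σa σm a θ μ = 0 ↔ ∫ x, effectiveDrift ν σm a x * rho0 ν σa σm a θ μ x = 0 := by
  rw [F, div_eq_zero_iff, or_iff_left (Z_pos hσm ν σa a θ μ).ne',
    integral_effectiveDrift_mul_rho0 hσa hσm, mul_eq_zero, or_iff_right hθ]

/-- The even function `arctan (σm |x| / σa)`; only the odd `arctan (σm x / σa)` appears in `rho0`,
but with absolute values the self-consistency equation is a `sinhTransform` over the whole line. -/
noncomputable def noiseAngle (σa σm x : ℝ) : ℝ := arctan (σm * |x| / σa)

/-- The drift integrated against the symmetric density `rho0` at `μ = 0`, made even by the absolute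
value to match `noiseAngle`. -/
noncomputable def driftDensity (ν σa σm a θ x : ℝ) : ℝ :=
  effectiveDrift ν σm a |x| * rho0 ν σa σm a θ 0 x

theorem integral_effectiveDrift_mul_rho0_eq_sinhTransform (hσm : σm ≠ 0) (ν σa a θ μ : ℝ) :
    ∫ x, effectiveDrift ν σm a x * rho0 ν σa σm a θ μ x =
      sinhTransform volume (driftDensity ν σa σm a θ) (noiseAngle σa σm)
        (2 * θ * μ / (σa * σm)) := by
  let k : ℝ := 2 * θ * μ / (σa * σm)
  let f : ℝ → ℝ := fun x => effectiveDrift ν σm a x * rho0 ν σa σm a θ 0 x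
  have rho0_eq : (fun x => effectiveDrift ν σm a x * rho0 ν σa σm a θ μ x) =
      fun x => f x * exp (k * arctan (σm * x / σa)) := by
    ext x
    rw [rho0_eq_rho0_zero_mul_exp, ← mul_assoc]
  have f_odd : f.Odd := fun x => by
    simp only [f, effectiveDrift_odd ν σm a x, rho0_zero_even ν σa σm a θ x, neg_mul]
  have angle_odd : (fun x => k * arctan (σm * x / σa)).Odd := fun x => by
    simp only [mul_neg, neg_div, arctan_neg]
  have int := integrable_effectiveDrift_mul_rho0 hσm ν σa a θ μ
  rw [rho0_eq] at int ⊢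
  rw [integral_mul_exp_eq_integral_mul_sinh f_odd angle_odd int, sinhTransform]
  congr 1 with x
  rcases abs_choice x with hx | hx
  · simp only [driftDensity, noiseAngle, hx, f, k]
  · simp only [driftDensity, noiseAngle, hx, f, k, effectiveDrift_odd ν σm a x, mul_neg, neg_div,
      arctan_neg, sinh_neg, neg_mul, neg_neg]

theorem integrable_driftDensity (hσm : σm ≠ 0) (ν σa a θ : ℝ) :
    Integrable (driftDensity ν σa σm a θ) := by
  refine (integrable_effectiveDrift_mul_rho0 hσm ν σa a θ 0).mono ?_ (.of_forall fun x => ?_)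
  · unfold driftDensity effectiveDrift rho0
    exact Measurable.aestronglyMeasurable (by fun_prop)
  · rcases abs_choice x with hx | hx
    · rw [driftDensity, hx]
    · rw [driftDensity, hx, effectiveDrift_odd, neg_mul, norm_neg]

theorem driftDensity_eq_mul_exp_logDiffusion (ν σa σm a θ x : ℝ) :
    driftDensity ν σa σm a θ x =
      driftDensity ν σa σm a 0 x * exp (-(θ / σm ^ 2 * logDiffusion σa σm x)) := by
  rw [driftDensity, rho0_zero_eq_mul_exp_logDiffusion, ← mul_assoc, ← driftDensity]

theorem continuous_noiseAngle (σa σm : ℝ) : Continuous (noiseAngle σa σm) := by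
  unfold noiseAngle
  fun_prop

theorem abs_noiseAngle_le (σa σm x : ℝ) : |noiseAngle σa σm x| ≤ π / 2 := abs_arctan_le _

theorem noiseAngle_nonneg (hσa : 0 < σa) (hσm : 0 < σm) (x : ℝ) : 0 ≤ noiseAngle σa σm x :=
  arctan_nonneg.2 (by positivity)

theorem noiseAngle_pos (hσa : 0 < σa) (hσm : 0 < σm) {x : ℝ} (hx : x ≠ 0) :
    0 < noiseAngle σa σm x :=
  arctan_pos.2 (by positivity)

theorem effectiveDrift_eq_mul_sub (hr : r ^ 2 = a + (1 - ν) * σm ^ 2) (x : ℝ) :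
    effectiveDrift ν σm a x = x * (r + x) * (r - x) := by
  rw [effectiveDrift, ← hr]
  ring

theorem driftDensity_pos (hr : r ^ 2 = a + (1 - ν) * σm ^ 2) (σa θ : ℝ) {x : ℝ} (hx : x ≠ 0)
    (hxr : |x| < r) : 0 < driftDensity ν σa σm a θ x := by
  have hx_pos : 0 < |x| := abs_pos.2 hx
  rw [driftDensity, effectiveDrift_eq_mul_sub hr]
  exact mul_pos (mul_pos (mul_pos hx_pos (by linarith)) (sub_pos.2 hxr)) (rho0_pos ..)

theorem driftDensity_neg (hr₀ : 0 < r) (hr : r ^ 2 = a + (1 - ν) * σm ^ 2) (σa θ : ℝ) {x : ℝ}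
    (hxr : r < |x|) : driftDensity ν σa σm a θ x < 0 := by
  rw [driftDensity, effectiveDrift_eq_mul_sub hr]
  have hx_pos : 0 < |x| := hr₀.trans hxr
  exact mul_neg_of_neg_of_pos (mul_neg_of_pos_of_neg (by positivity) (sub_neg.2 hxr))
    (rho0_pos ..)

theorem driftDensity_mul_sub_nonpos (hr₀ : 0 < r) (hr : r ^ 2 = a + (1 - ν) * σm ^ 2) (σa θ : ℝ)
    {f : ℝ → ℝ} (hf : MonotoneOn f (Ici 0)) (x : ℝ) :
    driftDensity ν σa σm a θ x * (f |x| - f r) ≤ 0 := by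
  have hx : |x| ∈ Ici 0 := abs_nonneg x
  rcases lt_trichotomy |x| r with hlt | heq | hgt
  · have drift_nonneg : 0 ≤ driftDensity ν σa σm a θ x := by
      rcases eq_or_ne x 0 with rfl | hx₀
      · simp [driftDensity, effectiveDrift]
      · exact (driftDensity_pos hr σa θ hx₀ hlt).le
    exact mul_nonpos_of_nonneg_of_nonpos drift_nonneg (sub_nonpos.2 (hf hx hr₀.le hlt.le))
  · simp [heq]
  · exact mul_nonpos_of_nonpos_of_nonneg (driftDensity_neg hr₀ hr σa θ hgt).le
      (sub_nonneg.2 (hf hr₀.le hx hgt.le))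

theorem singleCrossing_driftDensity (hσa : 0 < σa) (hσm : 0 < σm) (hr₀ : 0 < r)
    (hr : r ^ 2 = a + (1 - ν) * σm ^ 2) (θ : ℝ) :
    SingleCrossing volume (driftDensity ν σa σm a θ) (noiseAngle σa σm) (arctan (σm * r / σa)) := by
  have angle_strictMono : StrictMono fun t => arctan (σm * t / σa) := fun s t hst =>
    arctan_strictMono (by gcongr)
  refine ⟨driftDensity_mul_sub_nonpos hr₀ hr σa θ (angle_strictMono.monotone.monotoneOn _), ?_⟩
  refine (by simp : 0 < volume (Ioi r)).trans_le (measure_mono fun x hx => ?_)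
  have hxr : r < |x| := hx.trans_le (le_abs_self x)
  exact ⟨driftDensity_neg hr₀ hr σa θ hxr, angle_strictMono hxr⟩

theorem singleCrossing_neg_driftDensity_mul_sinh (hσa : 0 < σa) (hσm : 0 < σm) (hr₀ : 0 < r)
    (hr : r ^ 2 = a + (1 - ν) * σm ^ 2) (θ : ℝ) {h : ℝ} (hh : 0 < h) :
    SingleCrossing volume (fun x => -(driftDensity ν σa σm a θ x * sinh (h * noiseAngle σa σm x)))
      (fun x => -logDiffusion σa σm x) (-logDiffusion σa σm r) := by
  have strictMono := strictMonoOn_logDiffusion hσa.ne' hσm.ne'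
  refine ⟨fun x => ?_, (by simpa : 0 < volume (Ioo 0 r)).trans_le (measure_mono ?_)⟩
  · have sinh_nonneg : 0 ≤ sinh (h * noiseAngle σa σm x) :=
      sinh_nonneg_iff.2 (mul_nonneg hh.le (noiseAngle_nonneg hσa hσm x))
    have := mul_nonpos_of_nonneg_of_nonpos sinh_nonneg
      (driftDensity_mul_sub_nonpos hr₀ hr σa θ strictMono.monotoneOn x)
    rw [logDiffusion_abs] at this
    linarith
  · rintro x ⟨hx₀, hxr⟩
    refine ⟨neg_neg_of_pos (mul_pos ?_ ?_), neg_lt_neg (strictMono hx₀.le hr₀.le hxr)⟩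
    · exact driftDensity_pos hr σa θ hx₀.ne' (by rwa [abs_of_pos hx₀])
    · exact sinh_pos_iff.2 (mul_pos hh (noiseAngle_pos hσa hσm hx₀.ne'))

-- The drift is positive near `0`, and this is where the factor `exp (-(θ / σm²) * logDiffusion)`
-- of the density concentrates.
theorem eventually_sinhTransform_driftDensity_pos (hσa : 0 < σa) (hσm : 0 < σm) (hr₀ : 0 < r)
    (hr : r ^ 2 = a + (1 - ν) * σm ^ 2) {h : ℝ} (hh : 0 < h) :
    ∀ᶠ θ in atTop, 0 < sinhTransform volume (driftDensity ν σa σm a θ) (noiseAngle σa σm) h := by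
  let ℓ := logDiffusion σa σm
  let g : ℝ → ℝ := fun x => -(driftDensity ν σa σm a 0 x * sinh (h * noiseAngle σa σm x))
  have hg : Integrable g := (integrable_mul_sinh (integrable_driftDensity hσm.ne' ν σa a 0)
    (continuous_noiseAngle σa σm).aestronglyMeasurable (abs_noiseAngle_le σa σm) h).neg
  have integral_neg : ∀ᶠ t in atTop, ∫ x, g x * exp (t * (-ℓ x - -ℓ r)) < 0 :=
    eventually_integral_mul_exp_neg hg (measurable_logDiffusion σa σm).neg.aestronglyMeasurable
      (fun x => neg_nonpos.2 (logDiffusion_nonneg σa σm x))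
      (singleCrossing_neg_driftDensity_mul_sinh hσa hσm hr₀ hr 0 hh)
  have scale : Tendsto (fun θ => θ / σm ^ 2) atTop atTop :=
    tendsto_id.atTop_div_const (by positivity)
  filter_upwards [scale.eventually integral_neg] with θ hθ
  have weight (x : ℝ) : g x * exp (θ / σm ^ 2 * (-ℓ x - -ℓ r)) = -exp (θ / σm ^ 2 * ℓ r) *
      (driftDensity ν σa σm a θ x * sinh (h * noiseAngle σa σm x)) := by
    have exp_split : exp (θ / σm ^ 2 * (-ℓ x - -ℓ r)) =
        exp (θ / σm ^ 2 * ℓ r) * exp (-(θ / σm ^ 2 * ℓ x)) := by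
      rw [← exp_add]
      ring_nf
    rw [driftDensity_eq_mul_exp_logDiffusion, exp_split]
    ring
  simp only [weight] at hθ
  rw [integral_const_mul] at hθ
  exact pos_of_mul_neg_right hθ (neg_nonpos.2 (exp_pos _).le)

theorem ncard_zeros_F (hσa : 0 < σa) (hσm : 0 < σm) (hr₀ : 0 < r)
    (hr : r ^ 2 = a + (1 - ν) * σm ^ 2) (hθ : θ ≠ 0) {h : ℝ} (hh : 0 < h)
    (hS : 0 < sinhTransform volume (driftDensity ν σa σm a θ) (noiseAngle σa σm) h) :
    {μ | F ν σa σm a θ μ = 0}.ncard = 3 := by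
  let S := sinhTransform volume (driftDensity ν σa σm a θ) (noiseAngle σa σm)
  let c := 2 * θ / (σa * σm)
  have c_bijective : (c * ·).Bijective := mulLeft_bijective₀ c (by positivity)
  have zeros_eq : {μ | F ν σa σm a θ μ = 0} = (c * ·) ⁻¹' {k | S k = 0} := by
    ext μ
    rw [mem_preimage, mem_ofPred_eq, mem_ofPred_eq, F_eq_zero_iff hσa.ne' hσm.ne' hθ,
      integral_effectiveDrift_mul_rho0_eq_sinhTransform hσm.ne', mul_div_right_comm]
  rw [zeros_eq, ncard_preimage_of_injective_subset_range c_bijective.injective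
    (by simp [c_bijective.surjective.range_eq])]
  exact ncard_zeros_sinhTransform (integrable_driftDensity hσm.ne' ν σa a θ)
    (continuous_noiseAngle σa σm).aestronglyMeasurable (abs_noiseAngle_le σa σm)
    (noiseAngle_nonneg hσa hσm) (arctan_pos.2 (by positivity))
    (singleCrossing_driftDensity hσa hσm hr₀ hr θ) hh hS

end StationaryDensity

theorem stmt4_general (a ν σa σm : ℝ) (hσa : 0 < σa) (hσm : 0 < σm)
    (h : 0 < a + (1 - ν) * σm ^ 2) :
    ∃ θc : ℝ, 0 < θc ∧ ∀ θ : ℝ, θc < θ →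
      {μ : ℝ | F ν σa σm a θ μ = 0}.ncard = 3 := by
  have hr₀ := sqrt_pos.2 h
  have hr := sq_sqrt h.le
  obtain ⟨θ₀, hθ₀⟩ := eventually_atTop.1
    (eventually_sinhTransform_driftDensity_pos hσa hσm hr₀ hr one_pos)
  refine ⟨max θ₀ 1, by positivity, fun θ hθ => ?_⟩
  obtain ⟨hθ₀θ, hθ_one⟩ := max_lt_iff.1 hθ
  exact ncard_zeros_F hσa hσm hr₀ hr (by positivity) one_pos (hθ₀ θ hθ₀θ.le)

/-- For a ≤ 0 (convex potential), a non-Itô interpretation ν ∈ [0,1) and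
multiplicative noise with a + (1−ν)·σm² > 0, sufficiently strong cooperation θ produces exactly
three stationary measures: multiplicative noise induces a stable phase. -/
theorem stmt4 (a ν σa σm : ℝ) (ha : a ≤ 0) (hν : ν ∈ Set.Ico (0 : ℝ) 1)
    (hσa : 0 < σa) (hσm : 0 < σm) (h : 0 < a + (1 - ν) * σm ^ 2) :
    ∃ θc : ℝ, 0 < θc ∧ ∀ θ : ℝ, θc < θ →
      {μ : ℝ | F ν σa σm a θ μ = 0}.ncard = 3 :=
  stmt4_general a ν σa σm hσa hσm h
end
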